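/- arXiv:1705.03976 — 2 statements merged into one kernel-verified Lean document; each statement's English description precedes it below -/
import Mathlib

section
/- There is C > 0 such that for all h ∈ (0,1], all m ≥ M, and all E ∈ I: ∫₀^∞ |G(r)| dr ≤ C, where the integral is taken over r ≠ R. (This is the uniform error-control integral required by Olver's theorem on Airy-function approximation, and is the main result of the paper's Appendix B.) -/
open Set MeasureTheory Filter intervalIntegral

/-!
Write `r = R x`. The change of variables turns `G(r) dr` into `scaledG(x) dx`, where the scaled
coefficient `F(x) = R² f(R x)` has its turning point at `x = 1` and satisfies the same formula with
`S(x) = ∫₁ˣ √|F|` in place of the phase integral (`mul_G_eq_scaledG`). It therefore suffices to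
bound `|scaledG|` by a fixed integrable function `majorant`, up to a constant which depends only
on uniform bounds for `F` and its first three derivatives; these bounds are collected in
`ScaledData`. Expanding `ζ⁻³`, the bracket of `scaledG` is
`5 F'² / F² - 4 F'' / F + 4 / x² - (20/9) |F| / S²`, and three regimes occur.

* Near `x = 0` the function `F` behaves like `ν / x²` with `ν > 0`, and the leading parts
  `20 - 24 + 4` of the first three terms cancel. What remains is controlled by `|r W'|` and
  `|r² W''|`, both `O(r)` since `W = r² V₀` is smooth up to `0`, so these terms contribute `O(1)`
  to `scaledG`. As `|S| ≥ k (1 - log x)`, the last term contributes at most a multiple of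
  `1 / (x (1 - log x)²)`, which is integrable (`ScaledData.bound_left`).
* Near `x = 1` the singular terms cancel up to `O(1)`. With `φ = ±F(1 ± t)` and `Φ = ∫₀ᵗ √φ`, the
  function `Ψ = (2/3) φ^{3/2} / φ' + (4/15) φ^{5/2} φ'' / φ'³` has derivative `√φ + O(φ^{5/2})`,
  so `Φ` is known to the relative order `t²` that the double pole `5 φ'² / φ²` requires
  (`Phi_cmp`, `tp_bound`). Hence `|scaledG|` is at most a multiple of `|x - 1|^{-1/2}`
  (`ScaledData.bound_near`).
* For `x ≥ 2` one has `-F ≥ c` and `S ≥ k x`, so every term is `O(x⁻²)`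
  (`ScaledData.bound_right`).

Uniformity in `h`, `m`, `E` is `exists_uniform_lower`: for `m` above a threshold `m₀` the
centrifugal term dominates and the lower bounds on `±F` and `-F'` are explicit, whereas for
`m ≤ m₀` the turning point `R` stays in a bounded set and compactness gives them.
-/

/-! ### The bracket near a turning point -/

/-- Mean value inequality, with the derivative bounded below on the open interval only. -/
theorem mvt_le {u u' : ℝ → ℝ} {a b C : ℝ} (hab : a ≤ b)
    (hd : ∀ x ∈ Icc a b, HasDerivAt u (u' x) x) (hb : ∀ x ∈ Ioo a b, C ≤ u' x) :
    C * (b - a) ≤ u b - u a := by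
  rcases hab.eq_or_lt with rfl | hlt
  · simp
  obtain ⟨x, hx, hxe⟩ := exists_hasDerivAt_eq_slope u u' hlt
    (fun x hx => (hd x hx).continuousAt.continuousWithinAt)
    (fun x hx => hd x (Ioo_subset_Icc_self hx))
  have := hb x hx
  rw [hxe, le_div_iff₀ (by linarith)] at this
  exact this

/-- The bound for the regular part of the bracket near a turning point, in terms of a lower bound
`c` for the slope and an upper bound `K` for three derivatives. Here `y0` and `e0` are the constants
in `|y| ≤ y0 t` and `|q - 1 - y| ≤ e0 t²` for the `q`, `y` of `tp_bound`. -/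
noncomputable def tpConst (c K : ℝ) : ℝ :=
  let y0 := 2 / 5 * K ^ 2 / c ^ 2
  let e0 := 2 / 5 * (K / c ^ 3 + 3 * K ^ 2 / c ^ 4) * K ^ 2
  let w0 := y0 + e0
  5 * K ^ 2 / c ^ 2 * (2 * e0 + w0 ^ 2 + 4 * y0 * w0 + 2 * y0 * w0 ^ 2) * (K / c) ^ 2

section
variable {c K T : ℝ} {φ φ1 φ2 φ3 Φ : ℝ → ℝ}

/-- If `q = 1 + y + O(t²)` with `y = O(t)`, then `q² (1 - 2 y) = 1 + O(t²)`: the linear terms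
cancel. -/
theorem quad_remainder {q y y0 e0 t : ℝ} (ht0 : 0 < t) (ht1 : t ≤ 1) (y0p : 0 < y0) (e0p : 0 < e0)
    (hyb : |y| ≤ y0 * t) (heb : |q - 1 - y| ≤ e0 * t ^ 2) :
    |q ^ 2 * (1 - 2 * y) - 1| ≤
      (2 * e0 + (y0 + e0) ^ 2 + 4 * y0 * (y0 + e0) + 2 * y0 * (y0 + e0) ^ 2) * t ^ 2 := by
  obtain ⟨ε, hε⟩ : ∃ ε, ε = q - 1 - y := ⟨_, rfl⟩
  obtain ⟨w, hwd⟩ : ∃ w, w = y + ε := ⟨_, rfl⟩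
  obtain ⟨w0, hw0⟩ : ∃ w, w = y0 + e0 := ⟨_, rfl⟩
  rw [← hε] at heb
  rw [← hw0]
  have w0p : 0 < w0 := by rw [hw0]; positivity
  have hw : |w| ≤ w0 * t := by
    have h1 : e0 * t ^ 2 ≤ e0 * t := by
      have : t ^ 2 ≤ t := by nlinarith
      gcongr
    rw [hwd, hw0]
    refine (abs_add_le _ _).trans ?_
    linarith
  have hqw : q ^ 2 * (1 - 2 * y) - 1 = 2 * ε + w ^ 2 - 4 * y * w - 2 * y * w ^ 2 := by
    have : q = 1 + w := by rw [hwd, hε]; ring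
    rw [this, hwd]; ring
  rw [hqw]
  have a1 : |w| ^ 2 ≤ (w0 * t) ^ 2 := by gcongr
  have a2 : |y| * |w| ≤ (y0 * t) * (w0 * t) := by gcongr
  have a3 : |y| * |w| ^ 2 ≤ (y0 * 1) * (w0 * t) ^ 2 := by
    gcongr
    exact hyb.trans (by gcongr)
  calc _ ≤ |2 * ε| + |w ^ 2| + |4 * y * w| + |2 * y * w ^ 2| := by
        refine (abs_sub _ _).trans (add_le_add_left ((abs_sub _ _).trans
          (add_le_add_left (abs_add_le _ _) _)) _)
    _ = 2 * |ε| + |w| ^ 2 + 4 * (|y| * |w|) + 2 * (|y| * |w| ^ 2) := by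
        simp only [abs_mul, abs_pow, abs_two]
        rw [abs_of_pos (by norm_num : (0:ℝ) < 4)]; ring
    _ ≤ _ := by linarith

theorem phi_bounds (h0 : φ 0 = 0)
    (hd0 : ∀ t ∈ Icc 0 T, HasDerivAt φ (φ1 t) t)
    (hlo : ∀ t ∈ Icc 0 T, c ≤ φ1 t) (hhi : ∀ t ∈ Icc 0 T, φ1 t ≤ K)
    {t : ℝ} (ht : t ∈ Icc 0 T) : c * t ≤ φ t ∧ φ t ≤ K * t := by
  have hsub : ∀ x ∈ Icc 0 t, x ∈ Icc 0 T := fun x hx => ⟨hx.1, hx.2.trans ht.2⟩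
  constructor
  · have := mvt_le ht.1 (fun x hx => hd0 x (hsub x hx))
      (fun x hx => hlo x (hsub x (Ioo_subset_Icc_self hx)))
    simpa [h0] using this
  · have := mvt_le (u := fun x => - φ x) (u' := fun x => - φ1 x) (C := -K) ht.1
      (fun x hx => (hd0 x (hsub x hx)).neg)
      (fun x hx => neg_le_neg (hhi x (hsub x (Ioo_subset_Icc_self hx))))
    simp only [h0] at this
    linarith

theorem phi_mono (hc : 0 < c)
    (hd0 : ∀ t ∈ Icc 0 T, HasDerivAt φ (φ1 t) t)
    (hlo : ∀ t ∈ Icc 0 T, c ≤ φ1 t)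
    {s t : ℝ} (hs : 0 ≤ s) (hst : s ≤ t) (ht : t ≤ T) : φ s ≤ φ t := by
  have := mvt_le (C := 0) hst (fun x hx => hd0 x ⟨hs.trans hx.1, hx.2.trans ht⟩)
      (fun x hx => hc.le.trans (hlo x ⟨hs.trans hx.1.le, hx.2.le.trans ht⟩))
  linarith

/-- The derivative of `Ψ = (2/3) φ^{3/2} / φ' + (4/15) φ^{5/2} φ'' / φ'³` is `√φ` up to a term of
order `φ^{5/2}`; the second summand of `Ψ` removes the term of order `φ^{3/2}`. -/
theorem hasDerivAt_Psi {s : ℝ} (hpos : 0 < φ s) (h1pos : 0 < φ1 s)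
    (hd0 : HasDerivAt φ (φ1 s) s) (hd1 : HasDerivAt φ1 (φ2 s) s)
    (hd2 : HasDerivAt φ2 (φ3 s) s) :
    HasDerivAt (fun s => 2 / 3 * (φ s * √(φ s)) / φ1 s
        + 4 / 15 * (φ s ^ 2 * √(φ s)) * φ2 s / φ1 s ^ 3)
      (√(φ s) + 4 / 15 * (φ s ^ 2 * √(φ s)) * (φ3 s / φ1 s ^ 3 - 3 * φ2 s ^ 2 / φ1 s ^ 4)) s := by
  have hs : HasDerivAt (fun s => √(φ s)) (φ1 s / (2 * √(φ s))) s := hd0.sqrt hpos.ne'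
  have hA := (((hd0.mul hs).const_mul (2 / 3)).div hd1 h1pos.ne')
  have hB := (((((hd0.pow 2).mul hs).const_mul (4 / 15)).mul hd2).div (hd1.pow 3)
    (pow_pos h1pos 3).ne')
  refine (hA.add hB).congr_deriv ?_
  have hsq : 0 < √(φ s) := Real.sqrt_pos.2 hpos
  obtain ⟨q, hq⟩ : ∃ q, q = √(φ s) := ⟨_, rfl⟩
  have hφ : φ s = q ^ 2 := by rw [hq, Real.sq_sqrt hpos.le]
  simp only [Pi.mul_apply, Pi.pow_apply]
  rw [← hq] at hsq ⊢
  rw [hφ]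
  field_simp
  push_cast
  ring

/-- Compares `√φ` with `√φ φ' / K`, the derivative of `(2/3) φ^{3/2} / K`. -/
theorem Phi_lower (hc : 0 < c) (hK : 0 < K) (h0 : φ 0 = 0) (hΦ0 : Φ 0 = 0)
    (hd0 : ∀ t ∈ Icc 0 T, HasDerivAt φ (φ1 t) t)
    (hdΦ : ∀ t ∈ Icc 0 T, HasDerivAt Φ (√(φ t)) t)
    (hlo : ∀ t ∈ Icc 0 T, c ≤ φ1 t) (hhi : ∀ t ∈ Icc 0 T, φ1 t ≤ K)
    {t : ℝ} (ht : t ∈ Ioc 0 T) :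
    2 / 3 * (φ t * √(φ t)) / K ≤ Φ t := by
  have htI : t ∈ Icc 0 T := ⟨ht.1.le, ht.2⟩
  have hsub : ∀ x ∈ Icc 0 t, x ∈ Icc 0 T := fun x hx => ⟨hx.1, hx.2.trans ht.2⟩
  have hposs : ∀ s ∈ Ioc 0 T, 0 < φ s := fun s hs =>
    lt_of_lt_of_le (mul_pos hc hs.1) (phi_bounds h0 hd0 hlo hhi ⟨hs.1.le, hs.2⟩).1
  obtain ⟨hl, hu⟩ := phi_bounds h0 hd0 hlo hhi htI
  have hp := hposs t ht
  have hq : 0 < √(φ t) := Real.sqrt_pos.2 hp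
  have hcφ : ContinuousOn φ (Icc 0 t) := fun x hx =>
    (hd0 x (hsub x hx)).continuousAt.continuousWithinAt
  have hcΦ : ContinuousOn Φ (Icc 0 t) := fun x hx =>
    (hdΦ x (hsub x hx)).continuousAt.continuousWithinAt
  obtain ⟨x, hx, hxe⟩ := exists_hasDerivAt_eq_slope
    (fun s => Φ s - 2 / 3 * (φ s * √(φ s)) / K)
    (fun s => √(φ s) - √(φ s) * φ1 s / K) ht.1
    (by fun_prop)
    (fun s hs => by
      have hsT : s ∈ Icc 0 T := hsub s (Ioo_subset_Icc_self hs)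
      have hps := hposs s ⟨hs.1, hsT.2⟩
      have hs' : HasDerivAt (fun s => √(φ s)) (φ1 s / (2 * √(φ s))) s :=
        (hd0 s hsT).sqrt hps.ne'
      refine ((hdΦ s hsT).sub ((((hd0 s hsT).mul hs').const_mul (2 / 3)).div_const K)).congr_deriv
        ?_
      have hqs : 0 < √(φ s) := Real.sqrt_pos.2 hps
      congr 1
      field_simp
      have := Real.sq_sqrt hps.le
      linear_combination (-φ1 s) * this)
  have hxT := hsub x (Ioo_subset_Icc_self hx)
  have : 0 ≤ √(φ x) - √(φ x) * φ1 x / K := by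
    rw [sub_nonneg, div_le_iff₀ hK]
    exact mul_le_mul_of_nonneg_left (hhi x hxT) (Real.sqrt_nonneg _)
  rw [hxe] at this
  simp only [h0, hΦ0, sub_zero, zero_mul, mul_zero, zero_div] at this
  rw [le_div_iff₀ ht.1] at this
  linarith

/-- The phase integral `Φ = ∫₀ᵗ √φ` differs from the function `Ψ` of `hasDerivAt_Psi` by
`O(t φ^{5/2})`. -/
theorem Phi_cmp (hc : 0 < c) (hK : 0 < K) (h0 : φ 0 = 0) (hΦ0 : Φ 0 = 0)
    (hd0 : ∀ t ∈ Icc 0 T, HasDerivAt φ (φ1 t) t)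
    (hd1 : ∀ t ∈ Icc 0 T, HasDerivAt φ1 (φ2 t) t)
    (hd2 : ∀ t ∈ Icc 0 T, HasDerivAt φ2 (φ3 t) t)
    (hdΦ : ∀ t ∈ Icc 0 T, HasDerivAt Φ (√(φ t)) t)
    (hlo : ∀ t ∈ Icc 0 T, c ≤ φ1 t) (hhi : ∀ t ∈ Icc 0 T, φ1 t ≤ K)
    (hK2 : ∀ t ∈ Icc 0 T, |φ2 t| ≤ K) (hK3 : ∀ t ∈ Icc 0 T, |φ3 t| ≤ K)
    {t : ℝ} (ht : t ∈ Ioc 0 T) :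
    |Φ t - (2 / 3 * (φ t * √(φ t)) / φ1 t
        + 4 / 15 * (φ t ^ 2 * √(φ t)) * φ2 t / φ1 t ^ 3)| ≤
        4 / 15 * (φ t ^ 2 * √(φ t)) * (K / c ^ 3 + 3 * K ^ 2 / c ^ 4) * t := by
  have htI : t ∈ Icc 0 T := ⟨ht.1.le, ht.2⟩
  have hsub : ∀ x ∈ Icc 0 t, x ∈ Icc 0 T := fun x hx => ⟨hx.1, hx.2.trans ht.2⟩
  have hposs : ∀ s ∈ Ioc 0 T, 0 < φ s := fun s hs =>
    lt_of_lt_of_le (mul_pos hc hs.1) (phi_bounds h0 hd0 hlo hhi ⟨hs.1.le, hs.2⟩).1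
  obtain ⟨hl, hu⟩ := phi_bounds h0 hd0 hlo hhi htI
  have hp := hposs t ht
  have hq : 0 < √(φ t) := Real.sqrt_pos.2 hp
  have hcφ : ContinuousOn φ (Icc 0 t) := fun x hx =>
    (hd0 x (hsub x hx)).continuousAt.continuousWithinAt
  have hcφ1 : ContinuousOn φ1 (Icc 0 t) := fun x hx =>
    (hd1 x (hsub x hx)).continuousAt.continuousWithinAt
  have hcφ2 : ContinuousOn φ2 (Icc 0 t) := fun x hx =>
    (hd2 x (hsub x hx)).continuousAt.continuousWithinAt
  have hcΦ : ContinuousOn Φ (Icc 0 t) := fun x hx =>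
    (hdΦ x (hsub x hx)).continuousAt.continuousWithinAt
  have h1ne : ∀ x ∈ Icc 0 t, φ1 x ≠ 0 := fun x hx => (hc.trans_le (hlo x (hsub x hx))).ne'
  set D := K / c ^ 3 + 3 * K ^ 2 / c ^ 4 with hD
  have hDpos : 0 < D := by positivity
  obtain ⟨x, hx, hxe⟩ := exists_hasDerivAt_eq_slope
    (fun s => Φ s - (2 / 3 * (φ s * √(φ s)) / φ1 s
      + 4 / 15 * (φ s ^ 2 * √(φ s)) * φ2 s / φ1 s ^ 3))
    (fun s => √(φ s) - (√(φ s) + 4 / 15 * (φ s ^ 2 * √(φ s)) *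
      (φ3 s / φ1 s ^ 3 - 3 * φ2 s ^ 2 / φ1 s ^ 4))) ht.1
    (by
      refine hcΦ.sub (ContinuousOn.add (ContinuousOn.div (by fun_prop) hcφ1 h1ne)
        (ContinuousOn.div (by fun_prop) (by fun_prop) (fun x hx => pow_ne_zero _ (h1ne x hx)))))
    (fun s hs => by
      have hsT : s ∈ Icc 0 T := hsub s (Ioo_subset_Icc_self hs)
      exact (hdΦ s hsT).sub (hasDerivAt_Psi (hposs s ⟨hs.1, hsT.2⟩)
        (hc.trans_le (hlo s hsT)) (hd0 s hsT) (hd1 s hsT) (hd2 s hsT)))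
  have hxT := hsub x (Ioo_subset_Icc_self hx)
  have hlx := hlo x hxT
  have h1x : 0 < φ1 x := hc.trans_le hlx
  simp only [h0, hΦ0, sub_zero, zero_mul, mul_zero, zero_div, add_zero, ne_eq, OfNat.ofNat_ne_zero,
    not_false_eq_true, zero_pow] at hxe
  rw [eq_div_iff ht.1.ne'] at hxe
  rw [← hxe, abs_mul, abs_of_pos ht.1]
  refine mul_le_mul_of_nonneg_right ?_ ht.1.le
  rw [show ∀ a b : ℝ, a - (a + b) = -b by intros; ring, abs_neg, abs_mul]
  have hm : φ x ≤ φ t := phi_mono hc hd0 hlo hx.1.le hx.2.le ht.2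
  have hpx := hposs x ⟨hx.1, hxT.2⟩
  have hD' : |φ3 x / φ1 x ^ 3 - 3 * φ2 x ^ 2 / φ1 x ^ 4| ≤ D := by
    refine (abs_sub _ _).trans (add_le_add ?_ ?_)
    · rw [abs_div, abs_of_pos (pow_pos h1x 3)]
      exact div_le_div₀ hK.le (hK3 x hxT) (by positivity) (by gcongr)
    · rw [abs_of_nonneg (by positivity)]
      have : φ2 x ^ 2 ≤ K ^ 2 := sq_le_sq' (by linarith [(abs_le.1 (hK2 x hxT)).1]) (abs_le.1 (hK2 x hxT)).2
      exact div_le_div₀ (by positivity) (by gcongr) (by positivity) (by gcongr)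
  refine mul_le_mul ?_ hD' (abs_nonneg _) (by positivity)
  rw [abs_of_nonneg (by positivity)]
  gcongr

/-- Cancellation at a simple zero of `φ`: the poles of the three terms at `t = 0` cancel in their
combination. -/
theorem tp_bound (hc : 0 < c) (hK : 0 < K) (hT : T ≤ 1) (h0 : φ 0 = 0) (hΦ0 : Φ 0 = 0)
    (hd0 : ∀ t ∈ Icc 0 T, HasDerivAt φ (φ1 t) t)
    (hd1 : ∀ t ∈ Icc 0 T, HasDerivAt φ1 (φ2 t) t)
    (hd2 : ∀ t ∈ Icc 0 T, HasDerivAt φ2 (φ3 t) t)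
    (hdΦ : ∀ t ∈ Icc 0 T, HasDerivAt Φ (√(φ t)) t)
    (hlo : ∀ t ∈ Icc 0 T, c ≤ φ1 t) (hhi : ∀ t ∈ Icc 0 T, φ1 t ≤ K)
    (hK2 : ∀ t ∈ Icc 0 T, |φ2 t| ≤ K) (hK3 : ∀ t ∈ Icc 0 T, |φ3 t| ≤ K)
    {t : ℝ} (ht : t ∈ Ioc 0 T) :
    |5 * φ1 t ^ 2 / φ t ^ 2 - 4 * φ2 t / φ t - 20 / 9 * φ t / Φ t ^ 2| ≤ tpConst c K := by
  have htI : t ∈ Icc 0 T := ⟨ht.1.le, ht.2⟩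
  have hsub : ∀ x ∈ Icc 0 t, x ∈ Icc 0 T := fun x hx => ⟨hx.1, hx.2.trans ht.2⟩
  have hposs : ∀ s ∈ Ioc 0 T, 0 < φ s := fun s hs =>
    lt_of_lt_of_le (mul_pos hc hs.1) (phi_bounds h0 hd0 hlo hhi ⟨hs.1.le, hs.2⟩).1
  obtain ⟨hl, hu⟩ := phi_bounds h0 hd0 hlo hhi htI
  have hp := hposs t ht
  have hq : 0 < √(φ t) := Real.sqrt_pos.2 hp
  have hΦlo := Phi_lower hc hK h0 hΦ0 hd0 hdΦ hlo hhi ht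
  have hcmp := Phi_cmp hc hK h0 hΦ0 hd0 hd1 hd2 hdΦ hlo hhi hK2 hK3 ht
  set D := K / c ^ 3 + 3 * K ^ 2 / c ^ 4 with hD
  have hDpos : 0 < D := by positivity
  have h1 := hlo t htI
  have h1' := hhi t htI
  have h1p : 0 < φ1 t := hc.trans_le h1
  have h2 := hK2 t htI
  -- `q` is the ratio of `Φ` to its leading term and `y` the first correction; the expression to
  -- bound equals `5 φ'² / φ² * (q² (1 - 2 y) - 1) / q²`.
  set q := Φ t * φ1 t / (2 / 3 * (φ t * √(φ t))) with hqdef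
  set y := 2 / 5 * φ t * φ2 t / φ1 t ^ 2 with hy
  have ht1 : t ≤ 1 := ht.2.trans hT
  have ht0 := ht.1
  have hqlo : c / K ≤ q := by
    rw [hqdef, le_div_iff₀ (by positivity)]
    calc c / K * (2 / 3 * (φ t * √(φ t))) = (2 / 3 * (φ t * √(φ t))) / K * c := by ring
      _ ≤ Φ t * φ1 t := mul_le_mul hΦlo h1 hc.le (le_trans (by positivity) hΦlo)
  have hqpos : 0 < q := lt_of_lt_of_le (by positivity) hqlo
  set y0 := 2 / 5 * K ^ 2 / c ^ 2 with hy0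
  set e0 := 2 / 5 * D * K ^ 2 with he0
  have hyb : |y| ≤ y0 * t := by
    rw [hy, abs_div, abs_mul, abs_of_pos (by positivity : 0 < 2 / 5 * φ t),
      abs_of_pos (by positivity : 0 < φ1 t ^ 2), div_le_iff₀ (by positivity)]
    calc 2 / 5 * φ t * |φ2 t| ≤ 2 / 5 * (K * t) * K := by gcongr
      _ = y0 * t * c ^ 2 := by rw [hy0]; field_simp
      _ ≤ y0 * t * φ1 t ^ 2 := by gcongr
  have heb : |q - 1 - y| ≤ e0 * t ^ 2 := by
    have : q - 1 - y = (Φ t - (2 / 3 * (φ t * √(φ t)) / φ1 t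
        + 4 / 15 * (φ t ^ 2 * √(φ t)) * φ2 t / φ1 t ^ 3)) * (φ1 t / (2 / 3 * (φ t * √(φ t)))) := by
      rw [hqdef, hy]; field_simp; ring
    rw [this, abs_mul, abs_of_pos (by positivity : 0 < φ1 t / (2 / 3 * (φ t * √(φ t))))]
    calc _ ≤ 4 / 15 * (φ t ^ 2 * √(φ t)) * D * t * (φ1 t / (2 / 3 * (φ t * √(φ t)))) := by gcongr
      _ = 2 / 5 * D * (φ t * φ1 t) * t := by field_simp; ring
      _ ≤ 2 / 5 * D * (K * t * K) * t := by gcongr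
      _ = _ := by rw [he0]; ring
  have hmain : 5 * φ1 t ^ 2 / φ t ^ 2 - 4 * φ2 t / φ t - 20 / 9 * φ t / Φ t ^ 2 =
      5 * φ1 t ^ 2 / φ t ^ 2 * (q ^ 2 * (1 - 2 * y) - 1) * (1 / q) ^ 2 := by
    have hΦq : Φ t = q * (2 / 3 * (φ t * √(φ t))) / φ1 t := by
      rw [hqdef]; field_simp
    have hsq : √(φ t) ^ 2 = φ t := Real.sq_sqrt hp.le
    rw [hΦq, hy]
    clear_value q
    have e : (q * (2 / 3 * (φ t * √(φ t))) / φ1 t) ^ 2 = 4 / 9 * q ^ 2 * φ t ^ 3 / φ1 t ^ 2 := by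
      rw [div_pow, mul_pow, mul_pow, mul_pow, hsq]; ring
    rw [e]
    field_simp
    ring
  rw [hmain]
  have e0p : 0 < e0 := by positivity
  have y0p : 0 < y0 := by positivity
  have hbr := quad_remainder ht0 ht1 y0p e0p hyb heb
  set w0 := y0 + e0 with hw0
  rw [abs_mul, abs_mul, abs_of_nonneg (by positivity : 0 ≤ 5 * φ1 t ^ 2 / φ t ^ 2),
    abs_of_nonneg (by positivity : 0 ≤ (1 / q) ^ 2)]
  have hF : 5 * φ1 t ^ 2 / φ t ^ 2 ≤ 5 * K ^ 2 / (c * t) ^ 2 := by gcongr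
  have hq2 : 1 / q ≤ K / c := by
    rw [div_le_div_iff₀ hqpos hc]; rw [div_le_iff₀ hK] at hqlo; linarith
  calc _ ≤ 5 * K ^ 2 / (c * t) ^ 2 *
        ((2 * e0 + w0 ^ 2 + 4 * y0 * w0 + 2 * y0 * w0 ^ 2) * t ^ 2) * (K / c) ^ 2 := by gcongr
    _ = tpConst c K := by
      simp only [tpConst]
      rw [hw0, he0, hD, hy0]
      field_simp
end

/-! ### The integrable majorant -/

/-- A fixed integrable function on the line whose multiples dominate all scaled error-control
functions: a logarithmic tail at `0`, an inverse square root at the turning point `1`, and an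
inverse square at infinity. -/
noncomputable def majorant (x : ℝ) : ℝ :=
  indicator (Ioc 0 1) (fun x => 1 / (x * (1 - Real.log x) ^ 2)) x
    + indicator (Ioc 0 2) (fun x => (√|x - 1|)⁻¹) x
    + indicator (Ioi 2) (fun x => 1 / x ^ 2) x

/-- The integrand is the derivative of `(1 - log x)⁻¹`, which tends to `0` at `0⁺`. -/
theorem integrableOn_log_tail :
    IntegrableOn (fun x : ℝ => 1 / (x * (1 - Real.log x) ^ 2)) (Ioc 0 1) := by
  have hpos : ∀ x ∈ Ioc (0:ℝ) 1, 0 < 1 - Real.log x := fun x hx => by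
    have := Real.log_nonpos hx.1.le hx.2; linarith
  -- The value at `0` is prescribed because `Real.log 0 = 0` makes `(1 - log x)⁻¹` discontinuous.
  have hd : ∀ x ∈ Ioc (0:ℝ) 1, HasDerivAt (fun x : ℝ => if x ≤ 0 then 0 else (1 - Real.log x)⁻¹)
      (1 / (x * (1 - Real.log x) ^ 2)) x := fun x hx => by
    have h1 : HasDerivAt (fun x : ℝ => (1 - Real.log x)⁻¹) (1 / (x * (1 - Real.log x) ^ 2)) x := by
      refine (((Real.hasDerivAt_log hx.1.ne').const_sub 1).inv (hpos x hx).ne').congr_deriv ?_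
      have := hpos x hx
      have := hx.1
      field_simp
    refine h1.congr_of_eventuallyEq ?_
    filter_upwards [lt_mem_nhds hx.1] with y hy
    simp [not_le.2 hy]
  refine integrableOn_deriv_of_nonneg
    (g := fun x : ℝ => if x ≤ 0 then 0 else (1 - Real.log x)⁻¹) ?_
    (fun x hx => hd x (Ioo_subset_Ioc_self hx)) (fun x hx => ?_)
  · intro x hx
    rcases hx.1.eq_or_lt with rfl | h0
    · rw [← continuousWithinAt_sdiff_self]
      have hsub : Icc (0:ℝ) 1 \ {0} ⊆ Ioi 0 := fun y hy =>
        lt_of_le_of_ne hy.1.1 (fun h => hy.2 h.symm)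
      refine ContinuousWithinAt.mono ?_ hsub
      have : Tendsto (fun x : ℝ => (1 - Real.log x)⁻¹) (nhdsWithin 0 (Ioi 0)) (nhds 0) := by
        refine tendsto_inv_atTop_zero.comp ?_
        exact tendsto_atTop_add_const_left _ 1
          (tendsto_neg_atBot_atTop.comp Real.tendsto_log_nhdsGT_zero)
      unfold ContinuousWithinAt
      simp only [le_refl, if_true]
      refine this.congr' ?_
      filter_upwards [self_mem_nhdsWithin] with y hy
      simp [not_le.2 (mem_Ioi.1 hy)]
    · exact (hd x ⟨h0, hx.2⟩).continuousAt.continuousWithinAt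
  · have := hx.1
    positivity

theorem integrableOn_inv_sqrt : IntegrableOn (fun x : ℝ => (√|x - 1|)⁻¹) (Ioc 0 2) := by
  rw [← Ioc_union_Ioc_eq_Ioc (zero_le_one' ℝ) one_le_two]
  refine IntegrableOn.union ?_ ?_
  · refine integrableOn_deriv_of_nonneg (g := fun x : ℝ => -2 * √(1 - x)) (by fun_prop)
      (fun x hx => ?_) (fun x hx => by positivity)
    have h1 : 0 < 1 - x := by linarith [hx.2]
    rw [abs_sub_comm, abs_of_pos h1]
    refine ((((hasDerivAt_id x).const_sub 1).sqrt h1.ne').const_mul (-2)).congr_deriv ?_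
    simp only [id]
    field_simp
  · refine integrableOn_deriv_of_nonneg (g := fun x : ℝ => 2 * √(x - 1)) (by fun_prop)
      (fun x hx => ?_) (fun x hx => by positivity)
    have h1 : 0 < x - 1 := by linarith [hx.1]
    rw [abs_of_pos h1]
    refine ((((hasDerivAt_id x).sub_const 1).sqrt h1.ne').const_mul 2).congr_deriv ?_
    simp only [id]
    field_simp

theorem integrable_majorant : Integrable majorant := by
  unfold majorant
  refine Integrable.add (Integrable.add ?_ ?_) ?_
  · exact integrableOn_log_tail.integrable_indicator measurableSet_Ioc
  · exact integrableOn_inv_sqrt.integrable_indicator measurableSet_Ioc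
  · refine IntegrableOn.integrable_indicator ?_ measurableSet_Ioi
    refine (integrableOn_Ioi_rpow_of_lt (a := -2) (by norm_num) two_pos).congr_fun
      (fun x hx => ?_) measurableSet_Ioi
    have : (0:ℝ) < x := two_pos.trans hx
    simp only [Real.rpow_neg this.le]
    norm_num

theorem majorant_nonneg (x : ℝ) : 0 ≤ majorant x := by
  unfold majorant
  refine add_nonneg (add_nonneg ?_ ?_) ?_
  · exact indicator_nonneg (fun y hy => by have := hy.1; positivity) _
  · exact indicator_nonneg (fun y hy => by positivity) _
  · exact indicator_nonneg (fun y hy => by positivity) _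

/-! ### Bounds for the scaled function -/

/-- Quantitative hypotheses on a coefficient `F` on `(0, ∞)` with a simple zero at `1`, its
derivatives `F1`, `F2`, `F3`, and the phase integral `S = ∫₁ˣ √|F|`. The field `cancel` says that
the terms of order `x⁻⁶` in `5 F'² - 4 F'' F + 4 F² / x²` cancel at `0`. -/
structure ScaledData (c K δ : ℝ) (F F1 F2 F3 S : ℝ → ℝ) : Prop where
  hd0 : ∀ x > 0, HasDerivAt F (F1 x) x
  hd1 : ∀ x > 0, HasDerivAt F1 (F2 x) x
  hd2 : ∀ x > 0, HasDerivAt F2 (F3 x) x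
  hdS : ∀ x > 0, HasDerivAt S (√|F x|) x
  F_one : F 1 = 0
  S_one : S 1 = 0
  b0 : ∀ x ∈ Ioc (0:ℝ) 1, |F x| ≤ K / x ^ 2
  b0' : ∀ x ≥ 1, |F x| ≤ K
  b1 : ∀ x > 0, |F1 x| ≤ K / x ^ 3
  b2 : ∀ x > 0, |F2 x| ≤ K / x ^ 4
  b3 : ∀ x > 0, |F3 x| ≤ K / x ^ 5
  cancel : ∀ x ∈ Ioc (0:ℝ) 1, |5 * F1 x ^ 2 - 4 * F2 x * F x + 4 * F x ^ 2 / x ^ 2| ≤ K / x ^ 5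
  slope : ∀ x ∈ Icc (1 - δ) 2, c ≤ - F1 x
  left : ∀ x ∈ Ioc 0 (1 - δ), c / x ^ 2 ≤ F x
  right : ∀ x ≥ 2, c ≤ - F x

/-- The error-control function of `F`, with `ζ⁻³` expressed through the phase integral `S`. -/
noncomputable def scaledG (F F1 F2 S : ℝ → ℝ) (x : ℝ) : ℝ :=
  (√|F x|)⁻¹ * (5 * F1 x ^ 2 / F x ^ 2 - 4 * F2 x / F x + 4 / x ^ 2 - 20 / 9 * |F x| / S x ^ 2)

namespace ScaledData
variable {c K δ : ℝ} {F F1 F2 F3 S : ℝ → ℝ}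

/-- Powers of `1 / x` are bounded on `[1 - δ, 2]`, by a constant common to all exponents up to `5`. -/
theorem near_bound (hK : 0 < K) (hδ1 : δ < 1)
    {x : ℝ} (hx : x ∈ Icc (1 - δ) 2) {k : ℕ} (hk : k ≤ 5) {y : ℝ} (hy : |y| ≤ K / x ^ k) :
    |y| ≤ K * 2 ^ 5 / (1 - δ) ^ 5 := by
  have h1 : 0 < 1 - δ := by linarith
  have h2 : (1 - δ) / 2 ≤ x := by linarith [hx.1]
  have h3 : (1 - δ) / 2 ≤ 1 := by linarith [hx.1, hx.2]
  calc |y| ≤ K / x ^ k := hy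
    _ ≤ K / ((1 - δ) / 2) ^ k := by gcongr
    _ ≤ K / ((1 - δ) / 2) ^ 5 := by
      have := pow_le_pow_of_le_one (by positivity) h3 hk
      gcongr
    _ = _ := by field_simp

/-- The turning point estimates applied to `φ t = F (1 - t)`, `Φ t = - S (1 - t)`. -/
theorem near_left (D : ScaledData c K δ F F1 F2 F3 S) (hc : 0 < c) (hK : 0 < K)
    (hδ0 : 0 < δ) (hδ1 : δ < 1) {x : ℝ} (hx : x ∈ Ico (1 - δ) 1) :
    c * (1 - x) ≤ F x ∧ 2 / 3 * (F x * √(F x)) / (K * 2 ^ 5 / (1 - δ) ^ 5) ≤ - S x ∧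
    |5 * F1 x ^ 2 / F x ^ 2 - 4 * F2 x / F x - 20 / 9 * F x / S x ^ 2| ≤
      tpConst c (K * 2 ^ 5 / (1 - δ) ^ 5) := by
  have h1δ : 0 < 1 - δ := by linarith
  obtain ⟨K', hK'⟩ : ∃ K', K' = K * 2 ^ 5 / (1 - δ) ^ 5 := ⟨_, rfl⟩
  have hK'0 : 0 < K' := by rw [hK']; positivity
  have hpt : ∀ t ∈ Icc 0 δ, 0 < 1 - t ∧ 1 - t ∈ Icc (1 - δ) 2 := fun t ht =>
    ⟨by linarith [ht.2], by linarith [ht.2], by linarith [ht.1]⟩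
  have hd0 : ∀ t ∈ Icc 0 δ, HasDerivAt (fun t => F (1 - t)) (- F1 (1 - t)) t := fun t ht =>
    (D.hd0 _ (hpt t ht).1).comp_const_sub 1 t
  have hd1 : ∀ t ∈ Icc 0 δ, HasDerivAt (fun t => - F1 (1 - t)) (F2 (1 - t)) t := fun t ht =>
    ((D.hd1 _ (hpt t ht).1).comp_const_sub 1 t).neg.congr_deriv (neg_neg _)
  have hd2 : ∀ t ∈ Icc 0 δ, HasDerivAt (fun t => F2 (1 - t)) (- F3 (1 - t)) t := fun t ht =>
    (D.hd2 _ (hpt t ht).1).comp_const_sub 1 t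
  have hlo : ∀ t ∈ Icc 0 δ, c ≤ - F1 (1 - t) := fun t ht => D.slope _ (hpt t ht).2
  have hhi : ∀ t ∈ Icc 0 δ, - F1 (1 - t) ≤ K' := fun t ht => by
    have := near_bound hK hδ1 (hpt t ht).2 (by norm_num) (D.b1 _ (hpt t ht).1)
    rw [← hK'] at this
    exact (neg_le_abs _).trans this
  have h00 : (fun t => F (1 - t)) 0 = 0 := by simp [D.F_one]
  have hb := fun t (ht : t ∈ Icc 0 δ) => phi_bounds h00 hd0 hlo hhi ht
  have hdΦ : ∀ t ∈ Icc 0 δ, HasDerivAt (fun t => - S (1 - t)) (√(F (1 - t))) t := fun t ht => by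
    have := ((D.hdS _ (hpt t ht).1).comp_const_sub 1 t).neg
    rw [neg_neg, abs_of_nonneg ((mul_nonneg hc.le ht.1).trans (hb t ht).1)] at this
    exact this
  have hΦ0 : (fun t => - S (1 - t)) 0 = 0 := by simp [D.S_one]
  have htx : 1 - x ∈ Ioc 0 δ := ⟨by linarith [hx.2], by linarith [hx.1]⟩
  have e := hb (1 - x) ⟨htx.1.le, htx.2⟩
  have e1 := Phi_lower hc hK'0 h00 hΦ0 hd0 hdΦ hlo hhi htx
  have e2 := tp_bound hc hK'0 hδ1.le h00 hΦ0 hd0 hd1 hd2 hdΦ hlo hhi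
    (fun t ht => hK' ▸ near_bound hK hδ1 (hpt t ht).2 (by norm_num) (D.b2 _ (hpt t ht).1))
    (fun t ht => by
      rw [abs_neg]
      exact hK' ▸ near_bound hK hδ1 (hpt t ht).2 (by norm_num) (D.b3 _ (hpt t ht).1)) htx
  simp only [sub_sub_cancel, neg_sq] at e e1 e2
  rw [← hK']
  exact ⟨e.1, e1, e2⟩

/-- The turning point estimates applied to `φ t = - F (1 + t)`, `Φ t = S (1 + t)`. -/
theorem near_right (D : ScaledData c K δ F F1 F2 F3 S) (hc : 0 < c) (hK : 0 < K)
    (hδ0 : 0 < δ) (hδ1 : δ < 1) {x : ℝ} (hx : x ∈ Ioc 1 2) :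
    c * (x - 1) ≤ - F x ∧ 2 / 3 * (- F x * √(- F x)) / (K * 2 ^ 5 / (1 - δ) ^ 5) ≤ S x ∧
    |5 * F1 x ^ 2 / F x ^ 2 - 4 * F2 x / F x - 20 / 9 * (- F x) / S x ^ 2| ≤
      tpConst c (K * 2 ^ 5 / (1 - δ) ^ 5) := by
  have h1δ : 0 < 1 - δ := by linarith
  obtain ⟨K', hK'⟩ : ∃ K', K' = K * 2 ^ 5 / (1 - δ) ^ 5 := ⟨_, rfl⟩
  have hK'0 : 0 < K' := by rw [hK']; positivity
  have hpt : ∀ t ∈ Icc (0:ℝ) 1, 0 < 1 + t ∧ 1 + t ∈ Icc (1 - δ) 2 := fun t ht =>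
    ⟨by linarith [ht.1], by linarith [ht.1], by linarith [ht.2]⟩
  have hd0 : ∀ t ∈ Icc (0:ℝ) 1, HasDerivAt (fun t => - F (1 + t)) (- F1 (1 + t)) t := fun t ht =>
    ((D.hd0 _ (hpt t ht).1).comp_const_add 1 t).neg
  have hd1 : ∀ t ∈ Icc (0:ℝ) 1, HasDerivAt (fun t => - F1 (1 + t)) (- F2 (1 + t)) t := fun t ht =>
    ((D.hd1 _ (hpt t ht).1).comp_const_add 1 t).neg
  have hd2 : ∀ t ∈ Icc (0:ℝ) 1, HasDerivAt (fun t => - F2 (1 + t)) (- F3 (1 + t)) t := fun t ht =>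
    ((D.hd2 _ (hpt t ht).1).comp_const_add 1 t).neg
  have hlo : ∀ t ∈ Icc (0:ℝ) 1, c ≤ - F1 (1 + t) := fun t ht => D.slope _ (hpt t ht).2
  have hhi : ∀ t ∈ Icc (0:ℝ) 1, - F1 (1 + t) ≤ K' := fun t ht => by
    have := near_bound hK hδ1 (hpt t ht).2 (by norm_num) (D.b1 _ (hpt t ht).1)
    rw [← hK'] at this
    exact (neg_le_abs _).trans this
  have h00 : (fun t => - F (1 + t)) 0 = 0 := by simp [D.F_one]
  have hb := fun t (ht : t ∈ Icc (0:ℝ) 1) => phi_bounds h00 hd0 hlo hhi ht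
  have hdΦ : ∀ t ∈ Icc (0:ℝ) 1, HasDerivAt (fun t => S (1 + t)) (√(- F (1 + t))) t := fun t ht => by
    have := (D.hdS _ (hpt t ht).1).comp_const_add 1 t
    rw [← abs_neg, abs_of_nonneg ((mul_nonneg hc.le ht.1).trans (hb t ht).1)] at this
    exact this
  have hΦ0 : (fun t => S (1 + t)) 0 = 0 := by simp [D.S_one]
  have htx : x - 1 ∈ Ioc (0:ℝ) 1 := ⟨by linarith [hx.1], by linarith [hx.2]⟩
  have e := hb (x - 1) ⟨htx.1.le, htx.2⟩
  have e1 := Phi_lower hc hK'0 h00 hΦ0 hd0 hdΦ hlo hhi htx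
  have e2 := tp_bound hc hK'0 le_rfl h00 hΦ0 hd0 hd1 hd2 hdΦ hlo hhi
    (fun t ht => by
      rw [abs_neg]
      exact hK' ▸ near_bound hK hδ1 (hpt t ht).2 (by norm_num) (D.b2 _ (hpt t ht).1))
    (fun t ht => by
      rw [abs_neg]
      exact hK' ▸ near_bound hK hδ1 (hpt t ht).2 (by norm_num) (D.b3 _ (hpt t ht).1)) htx
  simp only [add_sub_cancel, neg_sq] at e e1 e2
  rw [show 4 * -F2 x / -F x = 4 * F2 x / F x by rw [mul_neg, neg_div_neg_eq]] at e2
  rw [← hK']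
  exact ⟨e.1, e1, e2⟩

theorem bound_near (D : ScaledData c K δ F F1 F2 F3 S) (hc : 0 < c) (hK : 0 < K)
    (hδ0 : 0 < δ) (hδ1 : δ < 1) {x : ℝ} (hx : x ∈ Icc (1 - δ) 2) (hx1 : x ≠ 1) :
    |scaledG F F1 F2 S x| ≤ (√c)⁻¹ * (tpConst c (K * 2 ^ 5 / (1 - δ) ^ 5) + 4 / (1 - δ) ^ 2)
      * majorant x := by
  have h1 : 0 < 1 - δ := by linarith
  have hx0 : 0 < x := h1.trans_le hx.1
  obtain ⟨hF, hG⟩ : c * |x - 1| ≤ |F x| ∧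
      |5 * F1 x ^ 2 / F x ^ 2 - 4 * F2 x / F x - 20 / 9 * |F x| / S x ^ 2| ≤
      tpConst c (K * 2 ^ 5 / (1 - δ) ^ 5) := by
    rcases lt_or_gt_of_ne hx1 with h | h
    · obtain ⟨a, -, b⟩ := D.near_left hc hK hδ0 hδ1 ⟨hx.1, h⟩
      have hp : 0 < F x := lt_of_lt_of_le (mul_pos hc (by linarith)) a
      rw [abs_of_pos hp, abs_sub_comm, abs_of_pos (by linarith)]
      exact ⟨a, b⟩
    · obtain ⟨a, -, b⟩ := D.near_right hc hK hδ0 hδ1 ⟨h, hx.2⟩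
      have hp : 0 < - F x := lt_of_lt_of_le (mul_pos hc (by linarith)) a
      rw [← abs_neg (F x), abs_of_pos hp, abs_of_pos (by linarith)]
      exact ⟨a, b⟩
  have hm : (√|x - 1|)⁻¹ ≤ majorant x := by
    unfold majorant
    rw [indicator_of_mem (s := Ioc (0:ℝ) 2) ⟨hx0, hx.2⟩, add_assoc, add_comm, add_assoc]
    refine le_add_of_nonneg_right (add_nonneg ?_ ?_)
    · exact indicator_nonneg (fun y hy => by positivity) _
    · exact indicator_nonneg (fun y hy => by have := hy.1; positivity) _
  have hxx : 0 < |x - 1| := abs_pos.2 (sub_ne_zero.2 hx1)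
  unfold scaledG
  rw [abs_mul, abs_of_nonneg (by positivity : 0 ≤ (√|F x|)⁻¹)]
  have hA : (√|F x|)⁻¹ ≤ (√c)⁻¹ * (√|x - 1|)⁻¹ := by
    rw [← mul_inv, ← Real.sqrt_mul hc.le]
    gcongr
  have hB : |5 * F1 x ^ 2 / F x ^ 2 - 4 * F2 x / F x + 4 / x ^ 2 - 20 / 9 * |F x| / S x ^ 2| ≤
      tpConst c (K * 2 ^ 5 / (1 - δ) ^ 5) + 4 / (1 - δ) ^ 2 := by
    rw [show ∀ a b c d : ℝ, a - b + c - d = (a - b - d) + c by intros; ring]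
    refine (abs_add_le _ _).trans (add_le_add hG ?_)
    rw [abs_of_pos (by positivity)]
    have := hx.1
    gcongr
  have hT : 0 ≤ tpConst c (K * 2 ^ 5 / (1 - δ) ^ 5) := (abs_nonneg _).trans hG
  calc _ ≤ ((√c)⁻¹ * (√|x - 1|)⁻¹) *
        (tpConst c (K * 2 ^ 5 / (1 - δ) ^ 5) + 4 / (1 - δ) ^ 2) := by gcongr
    _ = (√c)⁻¹ * (tpConst c (K * 2 ^ 5 / (1 - δ) ^ 5) + 4 / (1 - δ) ^ 2) * (√|x - 1|)⁻¹ := by ring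
    _ ≤ _ := by gcongr

/-- Bound on `(0, 1 - δ]`. Comparing `S' ≥ √c / x` with `k log x` yields `-S ≥ k (1 - log x)`; the
hypothesis `hks` provides this at the endpoint `1 - δ`. -/
theorem bound_left (D : ScaledData c K δ F F1 F2 F3 S) (hc : 0 < c) (hK : 0 < K)
    (hδ0 : 0 < δ) (hδ1 : δ < 1) {x : ℝ} (hx : x ∈ Ioc 0 (1 - δ)) {k : ℝ}
    (hk0 : 0 < k) (hkc : k ≤ √c)
    (hks : k * (1 - Real.log (1 - δ)) ≤
      2 / 3 * (c * δ * √(c * δ)) / (K * 2 ^ 5 / (1 - δ) ^ 5)) :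
    |scaledG F F1 F2 S x| ≤ (K / (√c * c ^ 2) + 20 / 9 * √K / k ^ 2) * majorant x := by
  have h1 : 0 < 1 - δ := by linarith
  have hx0 := hx.1
  have hx1 : x < 1 := by linarith [hx.2]
  have hFx := D.left x hx
  have hFp : 0 < F x := lt_of_lt_of_le (by positivity) hFx
  have hsq : ∀ y ∈ Ioc 0 (1 - δ), √c / y ≤ √|F y| := fun y hy => by
    have := (D.left y hy)
    have hy0 := hy.1
    refine Real.le_sqrt_of_sq_le ?_
    rw [div_pow, Real.sq_sqrt hc.le]
    exact this.trans (le_abs_self _)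
  have hSa : k * (1 - Real.log (1 - δ)) ≤ - S (1 - δ) := by
    obtain ⟨a, b, -⟩ := D.near_left hc hK hδ0 hδ1 ⟨le_rfl, by linarith⟩
    refine (hks.trans ?_).trans b
    rw [sub_sub_cancel] at a
    have : 0 < F (1 - δ) := lt_of_lt_of_le (by positivity) a
    gcongr
  have hlogx : 0 ≤ - Real.log x := by linarith [Real.log_nonpos hx0.le hx1.le]
  have hS : k * (1 - Real.log x) ≤ - S x := by
    have := mvt_le (u := fun y => S y - k * Real.log y) (u' := fun y => √|F y| - k * y⁻¹)
      (C := 0) hx.2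
      (fun y hy => (D.hdS y (hx0.trans_le hy.1)).sub
        ((Real.hasDerivAt_log (hx0.trans_le hy.1).ne').const_mul k))
      (fun y hy => by
        have hy0 := hx0.trans hy.1
        have := hsq y ⟨hy0, hy.2.le⟩
        have h2 : k * y⁻¹ ≤ √c / y := by rw [div_eq_mul_inv]; gcongr
        linarith)
    linarith
  have hSsq : (k * (1 - Real.log x)) ^ 2 ≤ S x ^ 2 := by
    rw [← neg_sq (S x)]
    have : 0 ≤ 1 - Real.log x := by linarith
    gcongr
  have hm : 1 / (x * (1 - Real.log x) ^ 2) + 1 ≤ majorant x := by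
    unfold majorant
    rw [indicator_of_mem (s := Ioc (0:ℝ) 2) ⟨hx0, by linarith⟩,
      indicator_of_mem (s := Ioc (0:ℝ) 1) ⟨hx0, hx1.le⟩,
      indicator_of_notMem (s := Ioi (2:ℝ)) (by simp only [mem_Ioi]; linarith), add_zero]
    refine add_le_add_right ?_ _
    refine (one_le_inv₀ (Real.sqrt_pos.2 (abs_pos.2 (by linarith)))).2 ?_
    rw [Real.sqrt_le_one]
    rw [abs_le]; constructor <;> linarith
  unfold scaledG
  rw [abs_of_pos hFp]
  have hq : 0 < √(F x) := Real.sqrt_pos.2 hFp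
  have hqq : √(F x) ^ 2 = F x := Real.sq_sqrt hFp.le
  have e : (√(F x))⁻¹ * (5 * F1 x ^ 2 / F x ^ 2 - 4 * F2 x / F x + 4 / x ^ 2
      - 20 / 9 * F x / S x ^ 2) =
      (5 * F1 x ^ 2 - 4 * F2 x * F x + 4 * F x ^ 2 / x ^ 2) / (√(F x) * F x ^ 2)
      - 20 / 9 * √(F x) / S x ^ 2 := by
    have : (√(F x))⁻¹ * (20 / 9 * F x / S x ^ 2) = 20 / 9 * √(F x) / S x ^ 2 := by
      nth_rewrite 2 [← hqq]; field_simp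
    rw [mul_sub, this]
    congr 1
    field_simp
  rw [e]
  have hsx := hsq x hx
  rw [abs_of_pos hFp] at hsx
  have t1 : |(5 * F1 x ^ 2 - 4 * F2 x * F x + 4 * F x ^ 2 / x ^ 2) / (√(F x) * F x ^ 2)| ≤
      K / (√c * c ^ 2) := by
    rw [abs_div, abs_of_pos (by positivity : 0 < √(F x) * F x ^ 2)]
    have hc' : 0 < √c := Real.sqrt_pos.2 hc
    calc _ ≤ (K / x ^ 5) / ((√c / x) * (c / x ^ 2) ^ 2) := by
          have := D.cancel x ⟨hx0, hx1.le⟩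
          gcongr
      _ = _ := by field_simp
  have t2 : |20 / 9 * √(F x) / S x ^ 2| ≤ 20 / 9 * √K / k ^ 2 * (1 / (x * (1 - Real.log x) ^ 2)) := by
    rw [abs_of_nonneg (by positivity)]
    have h3 : √(F x) ≤ √K / x := by
      refine (Real.sqrt_le_left (by positivity)).2 ?_
      rw [div_pow, Real.sq_sqrt hK.le]
      exact (le_abs_self _).trans (D.b0 x ⟨hx0, hx1.le⟩)
    have hl : 0 < 1 - Real.log x := by linarith
    calc _ ≤ 20 / 9 * (√K / x) / (k * (1 - Real.log x)) ^ 2 := by gcongr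
      _ = _ := by field_simp
  refine (abs_sub _ _).trans ?_
  have hl : 0 ≤ 1 / (x * (1 - Real.log x) ^ 2) := by positivity
  have c1 : 0 ≤ K / (√c * c ^ 2) := by positivity
  have c2 : 0 ≤ 20 / 9 * √K / k ^ 2 := by positivity
  calc _ ≤ K / (√c * c ^ 2) + 20 / 9 * √K / k ^ 2 * (1 / (x * (1 - Real.log x) ^ 2)) :=
        add_le_add t1 t2
    _ ≤ (K / (√c * c ^ 2) + 20 / 9 * √K / k ^ 2) * (1 / (x * (1 - Real.log x) ^ 2) + 1) := by
        nlinarith [mul_nonneg c1 hl]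
    _ ≤ _ := by gcongr

/-- Bound on `(2, ∞)`. From `S' ≥ √c` and `hks`, which provides the inequality at `2`, one gets
`S ≥ k x`. -/
theorem bound_right (D : ScaledData c K δ F F1 F2 F3 S) (hc : 0 < c) (hK : 0 < K)
    (hδ0 : 0 < δ) (hδ1 : δ < 1) {x : ℝ} (hx : 2 < x) {k : ℝ}
    (hk0 : 0 < k) (hkc : k ≤ √c)
    (hks : k * 2 ≤ 2 / 3 * (c * √c) / (K * 2 ^ 5 / (1 - δ) ^ 5)) :
    |scaledG F F1 F2 S x| ≤
      ((√c)⁻¹ * (5 * K ^ 2 / c ^ 2 + 4 * K / c + 4) + 20 / 9 * √K / k ^ 2) * majorant x := by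
  have h1 : 0 < 1 - δ := by linarith
  have hx0 : 0 < x := by linarith
  have hFx := D.right x hx.le
  have hFp : 0 < - F x := hc.trans_le hFx
  have hFa : |F x| = - F x := abs_of_neg (by linarith)
  have hS2 : k * 2 ≤ S 2 := by
    obtain ⟨-, b, -⟩ := D.near_right hc hK hδ0 hδ1 ⟨one_lt_two, le_rfl⟩
    refine (hks.trans ?_).trans b
    have := D.right 2 le_rfl
    have : 0 ≤ - F 2 := hc.le.trans this
    gcongr
  have hS : k * x ≤ S x := by
    have := mvt_le (u := fun y => S y - k * y) (u' := fun y => √|F y| - k * 1)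
      (C := 0) hx.le
      (fun y hy => (D.hdS y (two_pos.trans_le hy.1)).sub ((hasDerivAt_id y).const_mul k))
      (fun y hy => by
        have h2 : √c ≤ √|F y| :=
          Real.sqrt_le_sqrt ((D.right y hy.1.le).trans (neg_le_abs _))
        linarith)
    linarith
  have hm : majorant x = 1 / x ^ 2 := by
    unfold majorant
    rw [indicator_of_notMem (s := Ioc (0:ℝ) 2) (fun h => by linarith [h.2]),
      indicator_of_notMem (s := Ioc (0:ℝ) 1) (fun h => by linarith [h.2]),
      indicator_of_mem (s := Ioi (2:ℝ)) (by simpa using hx)]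
    ring
  rw [hm]
  unfold scaledG
  have hq : 0 < √|F x| := Real.sqrt_pos.2 (hFa ▸ hFp)
  have hqq : √|F x| ^ 2 = |F x| := Real.sq_sqrt (abs_nonneg _)
  have hcF : c ≤ |F x| := hFa ▸ hFx
  have hsc : √c ≤ √|F x| := Real.sqrt_le_sqrt hcF
  have hc' : 0 < √c := Real.sqrt_pos.2 hc
  rw [mul_sub]
  refine (abs_sub _ _).trans ?_
  rw [add_mul]
  have hx4 : (1:ℝ) ≤ x ^ 4 := one_le_pow₀ (by linarith)
  have hx2 : (1:ℝ) ≤ x ^ 2 := one_le_pow₀ (by linarith)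
  refine add_le_add ?_ ?_
  · rw [abs_mul, abs_of_pos (inv_pos.2 hq), mul_assoc]
    have a1 : |5 * F1 x ^ 2 / F x ^ 2| ≤ 5 * K ^ 2 / c ^ 2 * (1 / x ^ 2) := by
      rw [abs_div, abs_mul, abs_pow, abs_pow, abs_of_pos (by norm_num : (0:ℝ) < 5)]
      calc _ ≤ 5 * (K / x ^ 3) ^ 2 / c ^ 2 := by
            have := D.b1 x hx0
            gcongr
        _ = 5 * K ^ 2 / c ^ 2 * (1 / (x ^ 2 * x ^ 4)) := by field_simp
        _ ≤ _ := by
            gcongr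
            exact le_mul_of_one_le_right (by positivity) hx4
    have a2 : |4 * F2 x / F x| ≤ 4 * K / c * (1 / x ^ 2) := by
      rw [abs_div, abs_mul, abs_of_pos (by norm_num : (0:ℝ) < 4)]
      calc _ ≤ 4 * (K / x ^ 4) / c := by
            have := D.b2 x hx0
            gcongr
        _ = 4 * K / c * (1 / (x ^ 2 * x ^ 2)) := by field_simp
        _ ≤ _ := by
            gcongr
            exact le_mul_of_one_le_right (by positivity) hx2
    have a3 : |4 / x ^ 2| = 4 * (1 / x ^ 2) := by rw [abs_of_pos (by positivity)]; ring
    have : |5 * F1 x ^ 2 / F x ^ 2 - 4 * F2 x / F x + 4 / x ^ 2| ≤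
        (5 * K ^ 2 / c ^ 2 + 4 * K / c + 4) * (1 / x ^ 2) := by
      refine (abs_add_le _ _).trans ?_
      have := abs_sub (5 * F1 x ^ 2 / F x ^ 2) (4 * F2 x / F x)
      rw [a3]
      linarith
    gcongr
  · have e : (√|F x|)⁻¹ * (20 / 9 * |F x| / S x ^ 2) = 20 / 9 * √|F x| / S x ^ 2 := by
      nth_rewrite 2 [← hqq]; field_simp
    rw [e, abs_of_nonneg (by positivity)]
    have := D.b0' x (by linarith)
    calc _ ≤ 20 / 9 * √K / (k * x) ^ 2 := by gcongr
      _ = _ := by field_simp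

end ScaledData

theorem exists_scaledG_bound {c K δ : ℝ} (hc : 0 < c) (hK : 0 < K) (hδ0 : 0 < δ) (hδ1 : δ < 1) :
    ∃ C > 0, ∀ F F1 F2 F3 S : ℝ → ℝ, ScaledData c K δ F F1 F2 F3 S → ∀ x > 0, x ≠ 1 →
      |scaledG F F1 F2 S x| ≤ C * majorant x := by
  have h1 : 0 < 1 - δ := by linarith
  have hl : 0 < 1 - Real.log (1 - δ) := by
    have := Real.log_nonpos h1.le (by linarith); linarith
  obtain ⟨s, hs⟩ : ∃ s, s = 2 / 3 * (c * δ * √(c * δ)) / (K * 2 ^ 5 / (1 - δ) ^ 5) := ⟨_, rfl⟩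
  obtain ⟨s', hs'⟩ : ∃ s, s = 2 / 3 * (c * √c) / (K * 2 ^ 5 / (1 - δ) ^ 5) := ⟨_, rfl⟩
  have hs0 : 0 < s := by rw [hs]; positivity
  have hs'0 : 0 < s' := by rw [hs']; positivity
  obtain ⟨k, hk⟩ : ∃ k, k = min (√c) (min (s / (1 - Real.log (1 - δ))) (s' / 2)) := ⟨_, rfl⟩
  have hk0 : 0 < k := by
    rw [hk]; exact lt_min (Real.sqrt_pos.2 hc) (lt_min (by positivity) (by positivity))
  have k1 : k ≤ √c := hk ▸ min_le_left _ _
  have k2 : k * (1 - Real.log (1 - δ)) ≤ s := by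
    rw [← le_div_iff₀ hl, hk]; exact (min_le_right _ _).trans (min_le_left _ _)
  have k3 : k * 2 ≤ s' := by
    rw [← le_div_iff₀ two_pos, hk]; exact (min_le_right _ _).trans (min_le_right _ _)
  have hC := fun F F1 F2 F3 S (D : ScaledData c K δ F F1 F2 F3 S) x (hx : x ∈ Icc (1 - δ) 2) hx1 =>
    D.bound_near hc hK hδ0 hδ1 hx hx1
  obtain ⟨C1, hC1⟩ : ∃ C, C = (√c)⁻¹ * (tpConst c (K * 2 ^ 5 / (1 - δ) ^ 5) + 4 / (1 - δ) ^ 2) :=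
    ⟨_, rfl⟩
  obtain ⟨C2, hC2⟩ : ∃ C, C = K / (√c * c ^ 2) + 20 / 9 * √K / k ^ 2 := ⟨_, rfl⟩
  obtain ⟨C3, hC3⟩ : ∃ C, C = (√c)⁻¹ * (5 * K ^ 2 / c ^ 2 + 4 * K / c + 4)
    + 20 / 9 * √K / k ^ 2 := ⟨_, rfl⟩
  refine ⟨|C1| + |C2| + |C3| + 1, by positivity, fun F F1 F2 F3 S D x hx0 hx1 => ?_⟩
  have hm := majorant_nonneg x
  have n1 := abs_nonneg C1
  have n2 := abs_nonneg C2
  have n3 := abs_nonneg C3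
  rcases le_or_gt x (1 - δ) with hx | hx
  · refine (D.bound_left hc hK hδ0 hδ1 ⟨hx0, hx⟩ hk0 k1 (hs ▸ k2)).trans ?_
    rw [← hC2]
    exact mul_le_mul_of_nonneg_right (by linarith [le_abs_self C2]) hm
  rcases le_or_gt x 2 with hx2 | hx2
  · refine (D.bound_near hc hK hδ0 hδ1 ⟨hx.le, hx2⟩ hx1).trans ?_
    rw [← hC1]
    exact mul_le_mul_of_nonneg_right (by linarith [le_abs_self C1]) hm
  · refine (D.bound_right hc hK hδ0 hδ1 hx2 hk0 k1 (hs' ▸ k3)).trans ?_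
    rw [← hC3]
    exact mul_le_mul_of_nonneg_right (by linarith [le_abs_self C3]) hm

/-! ### The potential and its rescaling -/

/-- The hypotheses on the potential `V` with derivatives `V1`, `V2`, `V3`. The fields `w1` and `w2`
are bounds for `r W'` and `r² W''`, where `W = r² V` extends continuously to `0`. -/
structure PotentialData (C Kw : ℝ) (V V1 V2 V3 W : ℝ → ℝ) : Prop where
  hd0 : ∀ r > 0, HasDerivAt V (V1 r) r
  hd1 : ∀ r > 0, HasDerivAt V1 (V2 r) r
  hd2 : ∀ r > 0, HasDerivAt V2 (V3 r) r
  v0 : ∀ r > 0, |r ^ 2 * V r| ≤ C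
  v1 : ∀ r > 0, |r ^ 3 * V1 r| ≤ C
  v2 : ∀ r > 0, |r ^ 4 * V2 r| ≤ C
  v3 : ∀ r > 0, |r ^ 5 * V3 r| ≤ C
  hW : ContinuousOn W (Ici 0)
  hWV : ∀ r > 0, W r = r ^ 2 * V r
  w1 : ∀ r > 0, |2 * (r ^ 2 * V r) + r ^ 3 * V1 r| ≤ Kw * r
  w2 : ∀ r > 0, |2 * (r ^ 2 * V r) + 4 * (r ^ 3 * V1 r) + r ^ 4 * V2 r| ≤ Kw * r

/-- Up to `r = 1` the bounds `w1`, `w2` come from continuity of `W'` and `W''` on `[0, 1]`; beyond,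
from the symbol bounds on `V`. -/
theorem exists_potentialData {V W : ℝ → ℝ} {C : ℝ} (hW : ContDiffOn ℝ 3 W (Ici 0))
    (hWV : ∀ r > 0, W r = r ^ 2 * V r)
    (hCV : ∀ k : ℕ, k ≤ 3 → ∀ r > 0, |r ^ (2 + k) * iteratedDeriv k V r| ≤ C) :
    ∃ Kw ≥ 0, PotentialData C Kw V (deriv V) (deriv (deriv V)) (deriv (deriv (deriv V))) W := by
  have hV : ContDiffOn ℝ 3 V (Ioi 0) := by
    refine ContDiffOn.congr (f := fun r => W r / r ^ 2) ?_ (fun r hr => ?_)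
    · exact (hW.mono Ioi_subset_Ici_self).div (by fun_prop)
        (fun r hr => pow_ne_zero _ (ne_of_gt hr))
    · have : r ≠ 0 := ne_of_gt hr
      rw [hWV r hr]; field_simp
  have hV1 : ContDiffOn ℝ 2 (deriv V) (Ioi 0) := hV.deriv_of_isOpen isOpen_Ioi (by norm_num)
  have hV2 : ContDiffOn ℝ 1 (deriv (deriv V)) (Ioi 0) :=
    hV1.deriv_of_isOpen isOpen_Ioi (by norm_num)
  have hd0 : ∀ r > 0, HasDerivAt V (deriv V r) r := fun r hr =>
    ((hV.differentiableOn (by norm_num)).differentiableAt (Ioi_mem_nhds hr)).hasDerivAt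
  have hd1 : ∀ r > 0, HasDerivAt (deriv V) (deriv (deriv V) r) r := fun r hr =>
    ((hV1.differentiableOn (by norm_num)).differentiableAt (Ioi_mem_nhds hr)).hasDerivAt
  have hd2 : ∀ r > 0, HasDerivAt (deriv (deriv V)) (deriv (deriv (deriv V)) r) r := fun r hr =>
    ((hV2.differentiableOn (by norm_num)).differentiableAt (Ioi_mem_nhds hr)).hasDerivAt
  have v0 := hCV 0 (by norm_num)
  have v1 := hCV 1 (by norm_num)
  have v2 := hCV 2 (by norm_num)
  have v3 := hCV 3 (by norm_num)
  simp only [iteratedDeriv_succ, iteratedDeriv_zero, add_zero, Nat.reduceAdd] at v0 v1 v2 v3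
  have hW1 : ContDiffOn ℝ 2 (derivWithin W (Ici 0)) (Ici 0) :=
    hW.derivWithin (uniqueDiffOn_Ici 0) (by norm_num)
  have hW2 : ContDiffOn ℝ 1 (derivWithin (derivWithin W (Ici 0)) (Ici 0)) (Ici 0) :=
    hW1.derivWithin (uniqueDiffOn_Ici 0) (by norm_num)
  have e1 : ∀ r > 0, derivWithin W (Ici 0) r = 2 * r * V r + r ^ 2 * deriv V r := fun r hr => by
    rw [derivWithin_of_mem_nhds (Ici_mem_nhds hr)]
    have : HasDerivAt (fun r => r ^ 2 * V r) (2 * r * V r + r ^ 2 * deriv V r) r := by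
      refine ((hasDerivAt_pow 2 r).mul (hd0 r hr)).congr_deriv (by norm_num)
    refine (this.congr_of_eventuallyEq ?_).deriv
    filter_upwards [Ioi_mem_nhds hr] with y hy using hWV y hy
  have e2 : ∀ r > 0, derivWithin (derivWithin W (Ici 0)) (Ici 0) r =
      2 * V r + 4 * r * deriv V r + r ^ 2 * deriv (deriv V) r := fun r hr => by
    rw [derivWithin_of_mem_nhds (Ici_mem_nhds hr)]
    have : HasDerivAt (fun r => 2 * r * V r + r ^ 2 * deriv V r)
        (2 * V r + 4 * r * deriv V r + r ^ 2 * deriv (deriv V) r) r := by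
      refine ((((hasDerivAt_id r).const_mul 2).mul (hd0 r hr)).add
        ((hasDerivAt_pow 2 r).mul (hd1 r hr))).congr_deriv ?_
      simp only [id]; push_cast; ring
    refine (this.congr_of_eventuallyEq ?_).deriv
    filter_upwards [Ioi_mem_nhds hr] with y hy using e1 y hy
  obtain ⟨K1, hK1⟩ := (isCompact_Icc (a := (0:ℝ)) (b := 1)).exists_bound_of_continuousOn
    (hW1.continuousOn.mono Icc_subset_Ici_self)
  obtain ⟨K2, hK2⟩ := (isCompact_Icc (a := (0:ℝ)) (b := 1)).exists_bound_of_continuousOn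
    (hW2.continuousOn.mono Icc_subset_Ici_self)
  have hC : 0 ≤ C := (abs_nonneg _).trans (v0 1 one_pos)
  refine ⟨|K1| + |K2| + 7 * C, by positivity, hd0, hd1, hd2, v0, v1, v2, v3, hW.continuousOn, hWV,
    fun r hr => ?_, fun r hr => ?_⟩
  · rcases le_or_gt r 1 with h1 | h1
    · have := hK1 r ⟨hr.le, h1⟩
      rw [Real.norm_eq_abs, e1 r hr] at this
      rw [show 2 * (r ^ 2 * V r) + r ^ 3 * deriv V r = (2 * r * V r + r ^ 2 * deriv V r) * r by ring,
        abs_mul, abs_of_pos hr]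
      gcongr
      linarith [le_abs_self K1, abs_nonneg K2]
    · have a := abs_le.1 (v0 r hr)
      have b := abs_le.1 (v1 r hr)
      have : 7 * C ≤ (|K1| + |K2| + 7 * C) * r := by
        nlinarith [abs_nonneg K1, abs_nonneg K2, mul_nonneg hC (sub_nonneg.2 h1.le),
          mul_nonneg (abs_nonneg K1) hr.le, mul_nonneg (abs_nonneg K2) hr.le]
      rw [abs_le]; constructor <;> linarith
  · rcases le_or_gt r 1 with h1 | h1
    · have := hK2 r ⟨hr.le, h1⟩
      rw [Real.norm_eq_abs, e2 r hr] at this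
      rw [show 2 * (r ^ 2 * V r) + 4 * (r ^ 3 * deriv V r) + r ^ 4 * deriv (deriv V) r =
        (2 * V r + 4 * r * deriv V r + r ^ 2 * deriv (deriv V) r) * (r * r) by ring,
        abs_mul, abs_of_pos (mul_pos hr hr)]
      have h2 : r * r ≤ r := by nlinarith
      have h3 : 0 ≤ |K1| + |K2| + 7 * C := by positivity
      refine mul_le_mul ?_ h2 (by positivity) h3
      linarith [le_abs_self K2, abs_nonneg K1]
    · have a := abs_le.1 (v0 r hr)
      have b := abs_le.1 (v1 r hr)
      have b := abs_le.1 (v2 r hr)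
      have : 7 * C ≤ (|K1| + |K2| + 7 * C) * r := by
        nlinarith [abs_nonneg K1, abs_nonneg K2, mul_nonneg hC (sub_nonneg.2 h1.le),
          mul_nonneg (abs_nonneg K1) hr.le, mul_nonneg (abs_nonneg K2) hr.le]
      rw [abs_le]; constructor <;> linarith

theorem exists_pos_lower {u : ℝ → ℝ} {a b : ℝ} (hab : a ≤ b) (hu : ContinuousOn u (Icc a b))
    (hp : ∀ x ∈ Icc a b, 0 < u x) : ∃ c > 0, ∀ x ∈ Icc a b, c ≤ u x := by
  obtain ⟨x, hx, hmin⟩ := isCompact_Icc.exists_isMinOn (nonempty_Icc.2 hab) hu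
  exact ⟨u x, hp x hx, fun y hy => hmin hy⟩

/-- The cancellation at the origin, in the variables `p = (r² V + μ) / m`, `q = E r² / m`,
`w1 = r W' / m` and `w2 = r² W'' / m`. The coefficient of `p²` is `20 - 24 + 4 = 0`, and every other
product contains a small factor. -/
theorem cancel_bound {w1 w2 p q x B B1 : ℝ} (hx0 : 0 < x) (hx1 : x ≤ 1) (hB : 0 ≤ B)
    (hB1 : 0 ≤ B1) (h1 : |w1| ≤ B1 * x) (h2 : |w2| ≤ B1 * x) (hp : |p| ≤ B)
    (hq : |q| ≤ B * x ^ 2) :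
    |5 * (w1 - 2 * p) ^ 2 - 4 * (w2 - 4 * w1 + 6 * p) * (p - q) + 4 * (p - q) ^ 2| ≤
      (5 * B1 ^ 2 + 60 * (B1 * B) + 20 * B ^ 2) * x := by
  have e : 5 * (w1 - 2 * p) ^ 2 - 4 * (w2 - 4 * w1 + 6 * p) * (p - q) + 4 * (p - q) ^ 2 =
    5 * (w1 * w1) - 20 * (w1 * p) + 16 * (p * q) + 4 * (q * q) - 4 * ((w2 - 4 * w1) * (p - q)) := by
    ring
  have hxx : x ^ 2 ≤ x := by nlinarith
  have hq' : |q| ≤ B * x := hq.trans (by gcongr)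
  have hq1 : |q| ≤ B := hq'.trans (mul_le_of_le_one_right hB hx1)
  have hw1 : |w1| ≤ B1 := h1.trans (mul_le_of_le_one_right hB1 hx1)
  have a1 : |w1 * w1| ≤ B1 * (B1 * x) := by rw [abs_mul]; gcongr
  have a2 : |w1 * p| ≤ B1 * x * B := by rw [abs_mul]; gcongr
  have a3 : |p * q| ≤ B * (B * x) := by rw [abs_mul]; gcongr
  have a4 : |q * q| ≤ B * (B * x) := by rw [abs_mul]; gcongr
  have a5 : |(w2 - 4 * w1) * (p - q)| ≤ (5 * (B1 * x)) * (2 * B) := by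
    rw [abs_mul]
    have s1 : |w2 - 4 * w1| ≤ 5 * (B1 * x) := by
      have := abs_le.1 h1
      have := abs_le.1 h2
      rw [abs_le]; constructor <;> linarith
    have s2 : |p - q| ≤ 2 * B := by
      have := abs_le.1 hp
      have := abs_le.1 hq1
      rw [abs_le]; constructor <;> linarith
    gcongr
  rw [e]
  rw [abs_le] at *
  constructor <;> nlinarith

section scaling
variable (V V1 V2 V3 : ℝ → ℝ) (m μ E R : ℝ)

/-- The coefficient `f = m⁻¹ (V + μ / r² - E)` rescaled to `x = r / R`, including the factor `R²`. -/
noncomputable def sF (x : ℝ) : ℝ := R ^ 2 * (m⁻¹ * (V (R * x) + μ / (R * x) ^ 2 - E))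
/-- The first derivative of `sF` (independent of `E`). -/
noncomputable def sF1 (x : ℝ) : ℝ := R ^ 3 * (m⁻¹ * (V1 (R * x) - 2 * μ / (R * x) ^ 3))
/-- The second derivative of `sF` (independent of `E`). -/
noncomputable def sF2 (x : ℝ) : ℝ := R ^ 4 * (m⁻¹ * (V2 (R * x) + 6 * μ / (R * x) ^ 4))
/-- The third derivative of `sF` (independent of `E`). -/
noncomputable def sF3 (x : ℝ) : ℝ := R ^ 5 * (m⁻¹ * (V3 (R * x) - 24 * μ / (R * x) ^ 5))
/-- The phase integral of `sF` from the turning point `1`. -/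
noncomputable def sS (x : ℝ) : ℝ := ∫ y in (1:ℝ)..x, √|sF V m μ E R y|

variable {V V1 V2 V3 m μ E R}

theorem hasDerivAt_div_pow {r : ℝ} (hr : r ≠ 0) (a : ℝ) (n : ℕ) :
    HasDerivAt (fun r => a / r ^ n) (-(n * a) / r ^ (n + 1)) r := by
  refine ((hasDerivAt_pow n r).fun_inv (pow_ne_zero n hr)).const_mul a |>.congr_deriv ?_
  rcases n with _ | n
  · simp
  · push_cast
    field_simp
    ring

theorem sF_eq (hR : 0 < R) {x : ℝ} (hx : 0 < x) :
    sF V m μ E R x = (((R * x) ^ 2 * V (R * x) + μ) / m - E * (R * x) ^ 2 / m) / x ^ 2 := by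
  unfold sF; field_simp

theorem sF1_eq (hR : 0 < R) {x : ℝ} (hx : 0 < x) :
    sF1 V1 m μ R x = (((R * x) ^ 3 * V1 (R * x) - 2 * μ) / m) / x ^ 3 := by
  unfold sF1; field_simp

theorem sF2_eq (hR : 0 < R) {x : ℝ} (hx : 0 < x) :
    sF2 V2 m μ R x = (((R * x) ^ 4 * V2 (R * x) + 6 * μ) / m) / x ^ 4 := by
  unfold sF2; field_simp

theorem sF3_eq (hR : 0 < R) {x : ℝ} (hx : 0 < x) :
    sF3 V3 m μ R x = (((R * x) ^ 5 * V3 (R * x) - 24 * μ) / m) / x ^ 5 := by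
  unfold sF3; field_simp

theorem hasDerivAt_sF (hR : 0 < R) {x : ℝ} (hx : 0 < x)
    (h : HasDerivAt V (V1 (R * x)) (R * x)) :
    HasDerivAt (sF V m μ E R) (sF1 V1 m μ R x) x := by
  have h0 : R * x ≠ 0 := (mul_pos hR hx).ne'
  have hl : HasDerivAt (fun x => R * x) R x := by simpa using (hasDerivAt_id x).const_mul R
  have := HasDerivAt.comp (h := fun x => R * x) x
    ((((h.add (hasDerivAt_div_pow h0 μ 2)).sub_const E).const_mul m⁻¹).const_mul (R ^ 2)) hl
  refine this.congr_deriv ?_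
  unfold sF1; push_cast; ring

theorem hasDerivAt_sF1 (hR : 0 < R) {x : ℝ} (hx : 0 < x)
    (h : HasDerivAt V1 (V2 (R * x)) (R * x)) :
    HasDerivAt (sF1 V1 m μ R) (sF2 V2 m μ R x) x := by
  have h0 : R * x ≠ 0 := (mul_pos hR hx).ne'
  have hl : HasDerivAt (fun x => R * x) R x := by simpa using (hasDerivAt_id x).const_mul R
  have := HasDerivAt.comp (h := fun x => R * x) x
    (((h.sub (hasDerivAt_div_pow h0 (2 * μ) 3)).const_mul m⁻¹).const_mul (R ^ 3)) hl
  refine this.congr_deriv ?_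
  unfold sF2; push_cast; ring

theorem hasDerivAt_sF2 (hR : 0 < R) {x : ℝ} (hx : 0 < x)
    (h : HasDerivAt V2 (V3 (R * x)) (R * x)) :
    HasDerivAt (sF2 V2 m μ R) (sF3 V3 m μ R x) x := by
  have h0 : R * x ≠ 0 := (mul_pos hR hx).ne'
  have hl : HasDerivAt (fun x => R * x) R x := by simpa using (hasDerivAt_id x).const_mul R
  have := HasDerivAt.comp (h := fun x => R * x) x
    (((h.add (hasDerivAt_div_pow h0 (6 * μ) 4)).const_mul m⁻¹).const_mul (R ^ 4)) hl
  refine this.congr_deriv ?_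
  unfold sF3; push_cast; ring

theorem hasDerivAt_sS (hc : ∀ x > 0, ContinuousAt (sF V m μ E R) x) {x : ℝ} (hx : 0 < x) :
    HasDerivAt (sS V m μ E R) (√|sF V m μ E R x|) x := by
  have hco : ContinuousOn (fun y => √|sF V m μ E R y|) (Ioi 0) := fun y hy =>
    ((hc y hy).abs.sqrt).continuousWithinAt
  have hsub : uIcc 1 x ⊆ Ioi 0 := fun y hy => lt_of_lt_of_le (lt_min one_pos hx) hy.1
  refine integral_hasDerivAt_right (hco.mono hsub).intervalIntegrable ?_ ((hc x hx).abs.sqrt)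
  exact hco.stronglyMeasurableAtFilter isOpen_Ioi x hx

end scaling

/-! ### Uniform bounds -/

/-- Given lower bounds near `1`, to its left and to its right, the rescaled potential satisfies
`ScaledData` with an upper constant depending only on `B` and `B1`, which bound `(C + μ) / m` and
`Kw R / m`. -/
theorem scaledData_of {C Kw c δ m μ E R B B1 : ℝ} {V V1 V2 V3 W : ℝ → ℝ}
    (P : PotentialData C Kw V V1 V2 V3 W) (hm : 0 < m) (hμ : 0 ≤ μ) (hE : 0 < E) (hR : 0 < R)
    (hB1 : 0 ≤ B1) (hCB : C + μ ≤ B * m) (hKB : Kw * R ≤ B1 * m) (hturn : V R + μ / R ^ 2 = E)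
    (hslope : ∀ x ∈ Icc (1 - δ) 2, c ≤ - sF1 V1 m μ R x)
    (hleft : ∀ x ∈ Ioc 0 (1 - δ), c / x ^ 2 ≤ sF V m μ E R x)
    (hright : ∀ x ≥ 2, c ≤ - sF V m μ E R x) :
    ScaledData c (24 * B + (5 * B1 ^ 2 + 60 * (B1 * B) + 20 * B ^ 2)) δ (sF V m μ E R)
      (sF1 V1 m μ R) (sF2 V2 m μ R) (sF3 V3 m μ R) (sS V m μ E R) := by
  have hC : 0 ≤ C := (abs_nonneg _).trans (P.v0 1 one_pos)
  have hB : 0 ≤ B := by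
    by_contra h
    have : B * m < 0 := mul_neg_of_neg_of_pos (not_le.1 h) hm
    linarith
  have hER : E * R ^ 2 = R ^ 2 * V R + μ := by rw [← hturn]; field_simp
  have hERB : E * R ^ 2 ≤ B * m := by
    rw [hER]; linarith [(abs_le.1 (P.v0 R hR)).2]
  have hKe : 0 ≤ 5 * B1 ^ 2 + 60 * (B1 * B) + 20 * B ^ 2 := by positivity
  have hp : ∀ x > 0, |((R * x) ^ 2 * V (R * x) + μ) / m| ≤ B := fun x hx => by
    rw [abs_div, abs_of_pos hm, div_le_iff₀ hm]
    have := abs_le.1 (P.v0 (R * x) (mul_pos hR hx))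
    rw [abs_le]; constructor <;> linarith
  have hq : ∀ x > 0, |E * (R * x) ^ 2 / m| ≤ B * x ^ 2 := fun x hx => by
    rw [abs_of_nonneg (by positivity), div_le_iff₀ hm]
    calc E * (R * x) ^ 2 = E * R ^ 2 * x ^ 2 := by ring
      _ ≤ B * m * x ^ 2 := by gcongr
      _ = _ := by ring
  have hF : ∀ x > 0, |((R * x) ^ 2 * V (R * x) + μ) / m - E * (R * x) ^ 2 / m| ≤ B + B * x ^ 2 :=
    fun x hx => (abs_sub _ _).trans (add_le_add (hp x hx) (hq x hx))
  refine ⟨fun x hx => hasDerivAt_sF hR hx (P.hd0 _ (mul_pos hR hx)),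
    fun x hx => hasDerivAt_sF1 hR hx (P.hd1 _ (mul_pos hR hx)),
    fun x hx => hasDerivAt_sF2 hR hx (P.hd2 _ (mul_pos hR hx)),
    fun x hx => hasDerivAt_sS
      (fun y hy => (hasDerivAt_sF hR hy (P.hd0 _ (mul_pos hR hy))).continuousAt) hx,
    ?_, by simp [sS], fun x hx => ?_, fun x hx => ?_, fun x hx => ?_, fun x hx => ?_,
    fun x hx => ?_, fun x hx => ?_, hslope, hleft, hright⟩
  · simp [sF, hturn]
  · have hx0 := hx.1
    rw [sF_eq hR hx.1, abs_div, abs_of_pos (by positivity : 0 < x ^ 2)]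
    have := hF x hx.1
    have h1 : B * x ^ 2 ≤ B := mul_le_of_le_one_right hB (pow_le_one₀ hx.1.le hx.2)
    gcongr
    linarith
  · have hx0 : 0 < x := by linarith
    rw [sF_eq hR hx0, abs_div, abs_of_pos (by positivity : 0 < x ^ 2), div_le_iff₀ (by positivity)]
    have := hF x hx0
    have h1 : B ≤ B * x ^ 2 := le_mul_of_one_le_right hB (one_le_pow₀ hx)
    have h2 := mul_nonneg hKe (sq_nonneg x)
    linarith
  · rw [sF1_eq hR hx, abs_div, abs_of_pos (by positivity : 0 < x ^ 3)]
    gcongr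
    rw [abs_div, abs_of_pos hm, div_le_iff₀ hm]
    have := abs_le.1 (P.v1 (R * x) (mul_pos hR hx))
    have h2 := mul_nonneg hKe hm.le
    rw [abs_le]; constructor <;> linarith
  · rw [sF2_eq hR hx, abs_div, abs_of_pos (by positivity : 0 < x ^ 4)]
    gcongr
    rw [abs_div, abs_of_pos hm, div_le_iff₀ hm]
    have := abs_le.1 (P.v2 (R * x) (mul_pos hR hx))
    have h2 := mul_nonneg hKe hm.le
    rw [abs_le]; constructor <;> linarith
  · rw [sF3_eq hR hx, abs_div, abs_of_pos (by positivity : 0 < x ^ 5)]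
    gcongr
    rw [abs_div, abs_of_pos hm, div_le_iff₀ hm]
    have := abs_le.1 (P.v3 (R * x) (mul_pos hR hx))
    have h2 := mul_nonneg hKe hm.le
    rw [abs_le]; constructor <;> linarith
  · obtain ⟨hx0, hx1⟩ := hx
    have hr := mul_pos hR hx0
    have hw : ∀ w : ℝ, |w| ≤ Kw * (R * x) → |w / m| ≤ B1 * x := fun w h => by
      rw [abs_div, abs_of_pos hm, div_le_iff₀ hm]
      calc |w| ≤ Kw * R * x := by rw [mul_assoc]; exact h
        _ ≤ B1 * m * x := by gcongr
        _ = _ := by ring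
    have key := cancel_bound hx0 hx1 hB hB1 (hw _ (P.w1 _ hr)) (hw _ (P.w2 _ hr)) (hp x hx0)
      (hq x hx0)
    rw [sF_eq hR hx0, sF1_eq hR hx0, sF2_eq hR hx0, le_div_iff₀ (by positivity)]
    have h2 : 0 ≤ 24 * B * x := by positivity
    refine le_of_mul_le_mul_right (a := x) ?_ hx0
    refine le_trans (le_of_eq ?_) (key.trans (by linarith))
    rw [mul_assoc, ← abs_of_pos (by positivity : 0 < x ^ 5 * x), ← abs_mul]
    congr 1
    field_simp
    ring

/-- Lower bounds for `-F'` near the turning point and for `±F` away from it, uniform in the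
parameters. Large `m` is explicit; for bounded `m`, the equation `V R + μ / R² = E` bounds `R`, and
the constants are minima of positive continuous functions on compact intervals. At `r = 0` this is
where the positivity of `W 0 + M` enters. -/
theorem exists_uniform_lower {C Kw M r₂ Ea Eb : ℝ} {V V1 V2 V3 W : ℝ → ℝ}
    (P : PotentialData C Kw V V1 V2 V3 W) (hM : 0 < M) (hr₂ : 0 < r₂) (hEa : 0 < Ea)
    (hmono : ∀ r ≥ r₂, 0 < 2 * M - r ^ 3 * V1 r)
    (hbar : ∀ r ∈ Ioo 0 r₂, Eb < V r + M / r ^ 2) (hW0 : 0 < W 0 + M) :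
    ∃ c > 0, ∃ δ > 0, δ < 1 ∧ ∀ m μ E R, M ≤ m → m ≤ μ → μ ≤ m + 1 / 4 → Ea ≤ E → E ≤ Eb →
      r₂ ≤ R → V R + μ / R ^ 2 = E →
      (∀ x ∈ Icc (1 - δ) 2, c ≤ - sF1 V1 m μ R x) ∧
      (∀ x ∈ Ioc 0 (1 - δ), c / x ^ 2 ≤ sF V m μ E R x) ∧
      (∀ x ≥ 2, c ≤ - sF V m μ E R x) := by
  have hC : 0 ≤ C := (abs_nonneg _).trans (P.v0 1 one_pos)
  have hcont : ∀ r > 0, ContinuousAt (fun r => 2 * M - r ^ 3 * V1 r) r := fun r hr =>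
    continuousAt_const.sub ((continuousAt_id.pow 3).mul (P.hd1 r hr).continuousAt)
  -- monotonicity persists slightly to the left of `r₂`
  obtain ⟨r₁, hr₁0, hr₁₂, hmono1⟩ : ∃ r₁ > 0, r₁ < r₂ ∧ ∀ r ≥ r₁, 0 < 2 * M - r ^ 3 * V1 r := by
    have hev := (hcont r₂ hr₂).eventually (lt_mem_nhds (hmono r₂ le_rfl))
    obtain ⟨η, hη, hball⟩ := Metric.eventually_nhds_iff.1 hev
    refine ⟨max (r₂ - η / 2) (r₂ / 2), lt_max_of_lt_right (by positivity),
      max_lt (by linarith) (by linarith), fun r hr => ?_⟩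
    rcases le_or_gt r₂ r with h | h
    · exact hmono r h
    · refine hball ?_
      have := (le_max_left _ _).trans hr
      rw [Real.dist_eq, abs_lt]
      constructor <;> linarith
  -- With this `δ`, `x ≥ 1 - δ` and `R ≥ r₂` force `R x ≥ r₁`.
  obtain ⟨δ, hδ⟩ : ∃ δ, δ = 1 - r₁ / r₂ := ⟨_, rfl⟩
  have hδ0 : 0 < δ := by rw [hδ, sub_pos, div_lt_one hr₂]; exact hr₁₂
  have hδ1 : δ < 1 := by rw [hδ]; linarith [div_pos hr₁0 hr₂]
  -- Above `m₀` the term `μ / r²` dominates `V`.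
  obtain ⟨m₀, hm₀⟩ : ∃ m₀, m₀ = 4 * C / δ + C + M := ⟨_, rfl⟩
  have hm₀0 : 0 < m₀ := by rw [hm₀]; positivity
  have hm₀C : C ≤ m₀ := by rw [hm₀]; linarith [div_nonneg (mul_nonneg zero_le_four hC) hδ0.le]
  have hm₀δ : 2 * C ≤ δ / 2 * m₀ := by
    have : δ / 2 * m₀ = 2 * C + δ / 2 * (C + M) := by rw [hm₀]; field_simp; ring
    rw [this]
    have : 0 ≤ δ / 2 * (C + M) := by positivity
    linarith
  obtain ⟨Rm, hRm⟩ : ∃ Rm, Rm = √((C + m₀ + 1 / 4) / Ea) + r₂ := ⟨_, rfl⟩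
  have hRm2 : r₂ ≤ Rm := by rw [hRm]; linarith [Real.sqrt_nonneg ((C + m₀ + 1 / 4) / Ea)]
  have hRm0 : 0 < Rm := hr₂.trans_le hRm2
  -- `cA` bounds the slope on the compact range of `R x`, and `cB` bounds `r² (V + M / r² - E)`
  -- on the barrier, down to `r = 0`.
  obtain ⟨cA, hcA0, hcA⟩ := exists_pos_lower (a := r₁) (b := 2 * Rm) (by linarith)
    (fun r hr => (hcont r (hr₁0.trans_le hr.1)).continuousWithinAt)
    (fun r hr => hmono1 r hr.1)
  obtain ⟨cB, hcB0, hcB⟩ := exists_pos_lower (u := fun r => W r + M - Eb * r ^ 2) (a := 0) (b := r₁)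
    hr₁0.le (((P.hW.mono Icc_subset_Ici_self).add continuousOn_const).sub (by fun_prop))
    (fun r hr => by
      rcases hr.1.eq_or_lt with rfl | h0
      · simpa using hW0
      · have := hbar r ⟨h0, hr.2.trans_lt hr₁₂⟩
        rw [P.hWV r h0]
        have h2 : 0 < r ^ 2 * (V r + M / r ^ 2 - Eb) := mul_pos (by positivity) (by linarith)
        have h3 : r ^ 2 * (V r + M / r ^ 2 - Eb) = r ^ 2 * V r + M - Eb * r ^ 2 := by
          field_simp
        linarith)
  obtain ⟨c, hc0, c1, c2, c3, c4, c5⟩ : ∃ c > 0, c ≤ 1 / 8 ∧ c ≤ cA / (8 * m₀) ∧ c ≤ δ / 2 ∧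
      c ≤ cB / m₀ ∧ c ≤ (r₁ / Rm) ^ 2 * (cA / (8 * m₀) * δ) := by
    refine ⟨min (1 / 8) (min (cA / (8 * m₀)) (min (δ / 2) (min (cB / m₀)
      ((r₁ / Rm) ^ 2 * (cA / (8 * m₀) * δ))))), ?_, ?_, ?_, ?_, ?_, ?_⟩
    · refine lt_min (by norm_num) (lt_min (by positivity) (lt_min (by positivity)
        (lt_min (by positivity) (by positivity))))
    all_goals simp
  refine ⟨c, hc0, δ, hδ0, hδ1, fun m μ E R hmM hmμ hμm hEaE hEEb hRr hturn => ?_⟩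
  have hR : 0 < R := hr₂.trans_le hRr
  have hm : 0 < m := hM.trans_le hmM
  have hE : 0 < E := hEa.trans_le hEaE
  have hER : E * R ^ 2 = R ^ 2 * V R + μ := by rw [← hturn]; field_simp
  have hVR := abs_le.1 (P.v0 R hR)
  have hRsmall : m ≤ m₀ → R ≤ Rm := fun h => by
    have : R ≤ √((C + m₀ + 1 / 4) / Ea) := by
      refine Real.le_sqrt_of_sq_le ?_
      rw [le_div_iff₀ hEa]
      have : Ea * R ^ 2 ≤ E * R ^ 2 := by gcongr
      linarith
    linarith
  have hs1 : ∀ x > 0, - sF1 V1 m μ R x = ((2 * μ - (R * x) ^ 3 * V1 (R * x)) / m) / x ^ 3 :=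
    fun x hx => by rw [sF1_eq hR hx]; ring
  have hx8 : ∀ x : ℝ, 0 < x → x ≤ 2 → x ^ 3 ≤ 8 := fun x h0 h2 => by
    have : x ^ 3 ≤ 2 ^ 3 := by gcongr
    linarith
  have hsmall : m ≤ m₀ → ∀ x > 0, x ≤ 2 → r₁ ≤ R * x → cA / (8 * m₀) ≤ - sF1 V1 m μ R x := by
    intro hmm x hx0 hx2 hr
    have hA := hcA (R * x) ⟨hr, by
      have := hRsmall hmm
      calc R * x ≤ Rm * 2 := by gcongr
        _ = _ := by ring⟩
    rw [hs1 x hx0]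
    calc cA / (8 * m₀) = cA / m₀ / 8 := by field_simp
      _ ≤ (2 * μ - (R * x) ^ 3 * V1 (R * x)) / m / x ^ 3 := by
        have h1 : cA ≤ 2 * μ - (R * x) ^ 3 * V1 (R * x) := by linarith
        have h2 := hx8 x hx0 hx2
        have h3 : 0 ≤ 2 * μ - (R * x) ^ 3 * V1 (R * x) := hcA0.le.trans h1
        gcongr
  have hδR : r₁ ≤ R * (1 - δ) := by
    rw [hδ, sub_sub_cancel, mul_div_assoc', le_div_iff₀ hr₂, mul_comm]
    gcongr
  have hslope : ∀ x ∈ Icc (1 - δ) 2, c ≤ - sF1 V1 m μ R x := by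
    intro x hx
    have hx0 : 0 < x := by linarith [hx.1]
    rcases le_total m m₀ with hmm | hmm
    · refine c2.trans (hsmall hmm x hx0 hx.2 (hδR.trans ?_))
      have := hx.1
      gcongr
    · refine c1.trans ?_
      rw [hs1 x hx0]
      have h1 : m ≤ 2 * μ - (R * x) ^ 3 * V1 (R * x) := by
        linarith [(abs_le.1 (P.v1 _ (mul_pos hR hx0))).2]
      have h2 := hx8 x hx0 hx.2
      have h3 : 1 ≤ (2 * μ - (R * x) ^ 3 * V1 (R * x)) / m := by rwa [one_le_div hm]
      gcongr
  have hdF : ∀ x > 0, HasDerivAt (fun x => - sF V m μ E R x) (- sF1 V1 m μ R x) x := fun x hx =>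
    (hasDerivAt_sF hR hx (P.hd0 _ (mul_pos hR hx))).neg
  have hF1 : sF V m μ E R 1 = 0 := by simp [sF, hturn]
  refine ⟨hslope, fun x hx => ?_, fun x hx => ?_⟩
  · have hx0 := hx.1
    have hr := mul_pos hR hx0
    rcases le_total m m₀ with hmm | hmm
    · rcases le_total (R * x) r₁ with hrr | hrr
      · rw [sF_eq hR hx0]
        gcongr
        refine c4.trans ?_
        rw [← sub_div]
        have hb := hcB (R * x) ⟨hr.le, hrr⟩
        simp only [P.hWV _ hr] at hb
        have : E * (R * x) ^ 2 ≤ Eb * (R * x) ^ 2 := by gcongr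
        have h1 : cB ≤ (R * x) ^ 2 * V (R * x) + μ - E * (R * x) ^ 2 := by linarith
        have := hcB0.le.trans h1
        gcongr
      · have := mvt_le (u := fun x => - sF V m μ E R x) (u' := fun x => - sF1 V1 m μ R x)
          (C := cA / (8 * m₀)) (a := x) (b := 1) (by linarith [hx.2])
          (fun y hy => hdF y (hx0.trans_le hy.1))
          (fun y hy => hsmall hmm y (hx0.trans hy.1) (by linarith [hy.2]) (hrr.trans (by
            have := hy.1
            gcongr)))
        simp only [hF1] at this
        have h1 : cA / (8 * m₀) * δ ≤ cA / (8 * m₀) * (1 - x) := by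
          have := hx.2
          gcongr
          linarith
        have h2 : cA / (8 * m₀) * δ ≤ sF V m μ E R x := by linarith
        refine le_trans ?_ h2
        rw [div_le_iff₀ (by positivity)]
        refine c5.trans ?_
        rw [mul_comm]
        gcongr
        rw [div_le_iff₀ hRm0]
        refine hrr.trans ?_
        rw [mul_comm]
        have := hRsmall hmm
        gcongr
    · rw [sF_eq hR hx0]
      gcongr
      refine c3.trans ?_
      rw [← sub_div, le_div_iff₀ hm]
      have hv := abs_le.1 (P.v0 _ hr)
      have hx1 : x ^ 2 ≤ 1 - δ := by
        have : x * x ≤ (1 - δ) * 1 := mul_le_mul hx.2 (by linarith [hx.2]) hx0.le (by linarith)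
        linarith
      have h1 : E * (R * x) ^ 2 = x ^ 2 * (R ^ 2 * V R) + x ^ 2 * μ := by
        rw [mul_pow, mul_comm (R ^ 2), mul_left_comm, hER]; ring
      have h2 : x ^ 2 * (R ^ 2 * V R) ≤ 1 * C :=
        (mul_le_mul_of_nonneg_left hVR.2 (by positivity)).trans (by gcongr; linarith)
      have h3 : x ^ 2 * μ ≤ (1 - δ) * μ := mul_le_mul_of_nonneg_right hx1 (by linarith)
      have h4 : δ / 2 * m₀ ≤ δ / 2 * m := by gcongr
      have h5 : δ * m ≤ δ * μ := by gcongr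
      rw [h1]
      linarith
  · have a := mvt_le (u := fun x => - sF V m μ E R x) (u' := fun x => - sF1 V1 m μ R x)
      (C := c) (a := 1) (b := 2) one_le_two (fun y hy => hdF y (one_pos.trans_le hy.1))
      (fun y hy => hslope y ⟨by linarith [hy.1], hy.2.le⟩)
    have b := mvt_le (u := fun x => - sF V m μ E R x) (u' := fun x => - sF1 V1 m μ R x)
      (C := 0) (a := 2) (b := x) hx (fun y hy => hdF y (two_pos.trans_le hy.1))
      (fun y hy => by
        have hy0 : 0 < y := two_pos.trans hy.1
        rw [hs1 y hy0]
        have h1 : r₂ ≤ R * y := hRr.trans (le_mul_of_one_le_right hR.le (by linarith [hy.1]))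
        have := hmono (R * y) h1
        have : 0 ≤ 2 * μ - (R * y) ^ 3 * V1 (R * y) := by linarith
        positivity)
    simp only [hF1] at a
    linarith

/-- The pointwise bound by the fixed majorant, uniform in the parameters. The ratio `R / m` stays
bounded because `E R² = R² V R + μ = O(m)`. -/
theorem exists_uniform_bound {C Kw M r₂ Ea Eb : ℝ} {V V1 V2 V3 W : ℝ → ℝ}
    (P : PotentialData C Kw V V1 V2 V3 W) (hKw : 0 ≤ Kw) (hM : 0 < M) (hr₂ : 0 < r₂)
    (hEa : 0 < Ea)
    (hmono : ∀ r ≥ r₂, 0 < 2 * M - r ^ 3 * V1 r)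
    (hbar : ∀ r ∈ Ioo 0 r₂, Eb < V r + M / r ^ 2) (hW0 : 0 < W 0 + M) :
    ∃ A > 0, ∀ m μ E R, M ≤ m → m ≤ μ → μ ≤ m + 1 / 4 → Ea ≤ E → E ≤ Eb →
      r₂ ≤ R → V R + μ / R ^ 2 = E → ∀ x > 0, x ≠ 1 →
      |scaledG (sF V m μ E R) (sF1 V1 m μ R) (sF2 V2 m μ R) (sS V m μ E R) x| ≤
        A * majorant x := by
  obtain ⟨c, hc, δ, hδ0, hδ1, hlow⟩ := exists_uniform_lower P hM hr₂ hEa hmono hbar hW0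
  have hC : 0 ≤ C := (abs_nonneg _).trans (P.v0 1 one_pos)
  obtain ⟨B, hB⟩ : ∃ B, B = (C + 1 / 4) / M + 1 := ⟨_, rfl⟩
  have hB0 : 0 < B := by rw [hB]; positivity
  obtain ⟨B1, hB1⟩ : ∃ B1, B1 = Kw * (1 / M + B / Ea) := ⟨_, rfl⟩
  have hB10 : 0 ≤ B1 := by rw [hB1]; positivity
  obtain ⟨A, hA, hbd⟩ := exists_scaledG_bound hc
    (by positivity : 0 < 24 * B + (5 * B1 ^ 2 + 60 * (B1 * B) + 20 * B ^ 2)) hδ0 hδ1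
  refine ⟨A, hA, fun m μ E R hmM hmμ hμm hEaE hEEb hRr hturn => hbd _ _ _ (sF3 V3 m μ R) _ ?_⟩
  obtain ⟨l1, l2, l3⟩ := hlow m μ E R hmM hmμ hμm hEaE hEEb hRr hturn
  have hR : 0 < R := hr₂.trans_le hRr
  have hm : 0 < m := hM.trans_le hmM
  have hCB : C + μ ≤ B * m := by
    have : C + 1 / 4 ≤ (C + 1 / 4) / M * m := by
      rw [div_mul_eq_mul_div, le_div_iff₀ hM]; gcongr
    rw [hB]; linarith
  refine scaledData_of P hm (by linarith) (hEa.trans_le hEaE) hR hB10 hCB ?_ hturn l1 l2 l3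
  have hER : E * R ^ 2 = R ^ 2 * V R + μ := by rw [← hturn]; field_simp
  have h1 : R ^ 2 ≤ B / Ea * m := by
    rw [div_mul_eq_mul_div, le_div_iff₀ hEa]
    have : R ^ 2 * Ea ≤ E * R ^ 2 := by rw [mul_comm]; gcongr
    linarith [(abs_le.1 (P.v0 R hR)).2]
  have h2 : 1 ≤ 1 / M * m := by rw [one_div_mul_eq_div, one_le_div hM]; exact hmM
  have h3 : R ≤ 1 + R ^ 2 := by nlinarith [sq_nonneg (R - 1)]
  rw [hB1, mul_assoc]
  gcongr
  linarith

/-! ### Reduction to the scaled function -/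

/-- Scaling `r = R x` turns `R G(R x)` into `scaledG`. The sign conditions on `φ` on either side of
`R` are used to write `φ ζ⁻³` as a multiple of `|φ| / S²`. -/
theorem mul_G_eq_scaledG {C Kw m μ E R : ℝ} {V V1 V2 V3 W : ℝ → ℝ}
    (P : PotentialData C Kw V V1 V2 V3 W) (hR : 0 < R) {φ : ℝ → ℝ}
    (hφ : ∀ r, φ r = m⁻¹ * (V r + μ / r ^ 2 - E))
    (hpos : ∀ r ∈ Ioo 0 R, 0 < φ r) (hneg : ∀ r ∈ Ioi R, φ r < 0) {x : ℝ} (hx : 0 < x)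
    (hx1 : x ≠ 1) :
    R * (|φ (R * x)| ^ (-(1:ℝ)/2) *
      (5 * (φ (R * x)) ^ (-2 : ℤ) * (deriv φ (R * x)) ^ 2
        - 4 * (φ (R * x))⁻¹ * deriv (deriv φ) (R * x)
        - 16 * (-(1 / (4 * (R * x) ^ 2))) - 5 * φ (R * x) * (Real.sign (R - R * x) *
          (abs ((3/2 : ℝ) * ∫ s in R..(R * x), √|φ s|)) ^ ((2:ℝ)/3)) ^ (-3 : ℤ))) =
      scaledG (sF V m μ E R) (sF1 V1 m μ R) (sF2 V2 m μ R) (sS V m μ E R) x := by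
  have hr : 0 < R * x := mul_pos hR hx
  have hφd : ∀ r > 0, HasDerivAt φ (m⁻¹ * (V1 r - 2 * μ / r ^ 3)) r := fun r hr => by
    rw [funext hφ]
    refine ((((P.hd0 r hr).add (hasDerivAt_div_pow hr.ne' μ 2)).sub_const E).const_mul
      m⁻¹).congr_deriv ?_
    push_cast; ring
  have hφdd : HasDerivAt (deriv φ) (m⁻¹ * (V2 (R * x) + 6 * μ / (R * x) ^ 4)) (R * x) := by
    have h1 : HasDerivAt (fun r => m⁻¹ * (V1 r - 2 * μ / r ^ 3))
        (m⁻¹ * (V2 (R * x) + 6 * μ / (R * x) ^ 4)) (R * x) := by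
      refine (((P.hd1 _ hr).sub (hasDerivAt_div_pow hr.ne' (2 * μ) 3)).const_mul
        m⁻¹).congr_deriv ?_
      push_cast; ring
    refine h1.congr_of_eventuallyEq ?_
    filter_upwards [Ioi_mem_nhds hr] with y hy using (hφd y hy).deriv
  have e0 : ∀ y, φ (R * y) = sF V m μ E R y / R ^ 2 := fun y => by
    rw [hφ, sF]; field_simp
  have e1 : deriv φ (R * x) = sF1 V1 m μ R x / R ^ 3 := by
    rw [(hφd _ hr).deriv, sF1]; field_simp
  have e2 : deriv (deriv φ) (R * x) = sF2 V2 m μ R x / R ^ 4 := by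
    rw [hφdd.deriv, sF2]; field_simp
  have hsq : ∀ y, √|φ (R * y)| = √|sF V m μ E R y| / R := fun y => by
    rw [e0, abs_div, abs_of_pos (by positivity : 0 < R ^ 2), Real.sqrt_div (abs_nonneg _),
      Real.sqrt_sq hR.le]
  have eS : ∫ s in R..(R * x), √|φ s| = sS V m μ E R x := by
    have h1 := intervalIntegral.smul_integral_comp_mul_left (a := 1) (b := x)
      (fun s => √|φ s|) R
    rw [mul_one] at h1
    rw [← h1, sS, smul_eq_mul, ← intervalIntegral.integral_const_mul]
    congr 1 with y
    rw [hsq]; field_simp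
  -- The sign in `ζ` agrees with the sign of `φ`.
  have hφ0 : φ (R * x) ≠ 0 ∧ φ (R * x) * (Real.sign (R - R * x)) ^ (-3 : ℤ) = |φ (R * x)| := by
    rcases lt_or_gt_of_ne hx1 with h | h
    · have h2 : R * x < R := mul_lt_of_lt_one_right hR h
      have h3 := hpos (R * x) ⟨hr, h2⟩
      rw [Real.sign_of_pos (by linarith), abs_of_pos h3]
      exact ⟨h3.ne', by norm_num⟩
    · have h2 : R < R * x := lt_mul_of_one_lt_right hR h
      have h3 := hneg (R * x) h2
      rw [Real.sign_of_neg (by linarith), abs_of_neg h3]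
      refine ⟨h3.ne, ?_⟩
      rw [zpow_neg]; norm_num [zpow_ofNat]
  obtain ⟨hne, hsgn⟩ := hφ0
  have hF0 : sF V m μ E R x ≠ 0 := fun h => hne (by rw [e0, h, zero_div])
  have hp : |φ (R * x)| ^ (-(1:ℝ)/2) = R * (√|sF V m μ E R x|)⁻¹ := by
    rw [neg_div, Real.rpow_neg (abs_nonneg _), ← Real.sqrt_eq_rpow, hsq, inv_div, div_eq_mul_inv]
  -- Both sides vanish if `sS` does, so no nonvanishing of the phase is needed.
  have hζ : (|(3/2 : ℝ) * sS V m μ E R x| ^ ((2:ℝ)/3)) ^ (-3 : ℤ) =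
      (9 / 4 * sS V m μ E R x ^ 2)⁻¹ := by
    rw [zpow_neg, show (3 : ℤ) = ((3 : ℕ) : ℤ) by rfl, zpow_natCast, ← Real.rpow_natCast,
      ← Real.rpow_mul (abs_nonneg _)]
    norm_num
    rw [mul_pow]; norm_num [mul_comm]
  rw [eS, mul_zpow, hζ, hp, e1, e2]
  have h5 : 5 * φ (R * x) * (Real.sign (R - R * x) ^ (-3 : ℤ) * (9 / 4 * sS V m μ E R x ^ 2)⁻¹) =
      20 / 9 * |sF V m μ E R x| / sS V m μ E R x ^ 2 / R ^ 2 := by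
    rw [← mul_assoc, mul_assoc 5, hsgn, e0, abs_div, abs_of_pos (by positivity : 0 < R ^ 2),
      mul_inv]
    ring
  rw [h5, e0, scaledG, zpow_neg, show (2 : ℤ) = ((2 : ℕ) : ℤ) by rfl, zpow_natCast]
  generalize 20 / 9 * |sF V m μ E R x| / sS V m μ E R x ^ 2 = Z
  generalize (√|sF V m μ E R x|)⁻¹ = Y
  field_simp
  ring

/-- Olver error-control integral for Airy approximation: there is `C > 0` such that
`∫₀^∞ |G(r)| dr ≤ C` (over `r ≠ R`), uniformly for `h ∈ (0,1]`, `m ≥ M`, `E ∈ I`. -/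
theorem G_integral_uniformly_bounded
    (V₀ : ℝ → ℝ)
    (hext : ∃ W : ℝ → ℝ, ContDiffOn ℝ 3 W (Set.Ici 0) ∧ ∀ r > 0, W r = r ^ 2 * V₀ r)
    (C_V : ℝ)
    (hCV : ∀ k : ℕ, k ≤ 3 → ∀ r > 0, |r ^ (2 + k) * iteratedDeriv k V₀ r| ≤ C_V)
    (M r₂ : ℝ) (hM : 0 < M) (hr₂pos : 0 < r₂)
    (I : Set ℝ) (hI : ∃ Ea Eb : ℝ, 0 < Ea ∧ Ea ≤ Eb ∧ I = Set.Icc Ea Eb)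
    (hmono : ∀ r ≥ r₂, deriv (fun s => V₀ s + M / s ^ 2) r < 0)
    (hbarrier : ∀ E ∈ I, ∀ r ∈ Set.Ioo (0:ℝ) r₂, E < V₀ r + M / r ^ 2)
    (hlim : ∃ L : ℝ, Filter.Tendsto (fun r => r ^ 2 * V₀ r)
      (nhdsWithin 0 (Set.Ioi 0)) (nhds L) ∧ 0 < L + M)
    (R : ℝ → ℝ → ℝ → ℝ)
    (hR : ∀ h ∈ Set.Ioc (0:ℝ) 1, ∀ m ≥ M, ∀ E ∈ I,
      r₂ ≤ R h m E ∧ V₀ (R h m E) + (m + h ^ 2 / 4) / (R h m E) ^ 2 = E ∧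
      (∀ r ∈ Set.Ioo 0 (R h m E), E < V₀ r + (m + h ^ 2 / 4) / r ^ 2) ∧
      (∀ r ∈ Set.Ioi (R h m E), V₀ r + (m + h ^ 2 / 4) / r ^ 2 < E))
    (f : ℝ → ℝ → ℝ → ℝ → ℝ)
    (hf : ∀ h m E r, f h m E r = m⁻¹ * (V₀ r + (m + h ^ 2 / 4) / r ^ 2 - E))
    (g : ℝ → ℝ) (hg : ∀ r, g r = -(1 / (4 * r ^ 2)))
    (ζO : ℝ → ℝ → ℝ → ℝ → ℝ)
    (hζO : ∀ h m E r, ζO h m E r = Real.sign (R h m E - r) *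
      (abs ((3/2 : ℝ) * ∫ s in (R h m E)..r, Real.sqrt (abs (f h m E s)))) ^ ((2:ℝ)/3))
    (G : ℝ → ℝ → ℝ → ℝ → ℝ)
    (hG : ∀ h m E r, G h m E r = (abs (f h m E r)) ^ (-(1:ℝ)/2) *
      (5 * (f h m E r) ^ (-2 : ℤ) * (deriv (f h m E) r) ^ 2
        - 4 * (f h m E r)⁻¹ * deriv (deriv (f h m E)) r
        - 16 * g r - 5 * f h m E r * (ζO h m E r) ^ (-3 : ℤ)))
    :
    ∃ C > (0:ℝ), ∀ h ∈ Set.Ioc (0:ℝ) 1, ∀ m ≥ M, ∀ E ∈ I,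
      ∫ r in Set.Ioi (0:ℝ) \ {R h m E}, |G h m E r| ≤ C := by
  obtain ⟨W, hW, hWV⟩ := hext
  obtain ⟨Ea, Eb, hEa, hEab, rfl⟩ := hI
  obtain ⟨L, hL, hLM⟩ := hlim
  obtain ⟨Kw, hKw, P⟩ := exists_potentialData hW hWV hCV
  have hW0 : 0 < W 0 + M := by
    have h1 : Tendsto W (nhdsWithin 0 (Ioi 0)) (nhds (W 0)) :=
      (hW.continuousOn 0 self_mem_Ici).mono_left (nhdsWithin_mono _ Ioi_subset_Ici_self)
    have h2 : Tendsto W (nhdsWithin 0 (Ioi 0)) (nhds L) := by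
      refine hL.congr' ?_
      filter_upwards [self_mem_nhdsWithin] with r hr using (hWV r hr).symm
    rwa [tendsto_nhds_unique h1 h2]
  have hmono' : ∀ r ≥ r₂, 0 < 2 * M - r ^ 3 * deriv V₀ r := fun r hr => by
    have hr0 : 0 < r := hr₂pos.trans_le hr
    have h1 := hmono r hr
    rw [((P.hd0 r hr0).fun_add (hasDerivAt_div_pow hr0.ne' M 2)).deriv] at h1
    have h2 : r ^ 3 * (deriv V₀ r + -((2 : ℕ) * M) / r ^ (2 + 1)) = r ^ 3 * deriv V₀ r - 2 * M := by
      push_cast; field_simp; ring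
    have h3 := mul_neg_of_pos_of_neg (by positivity : 0 < r ^ 3) h1
    linarith
  obtain ⟨A, hA, hbd⟩ := exists_uniform_bound P hKw hM hr₂pos hEa hmono'
    (hbarrier Eb ⟨hEab, le_rfl⟩) hW0
  have hJ : 0 ≤ ∫ x, majorant x := integral_nonneg majorant_nonneg
  refine ⟨A * (∫ x, majorant x) + 1, by positivity, fun h hh m hm E hE => ?_⟩
  obtain ⟨hRr, hturn, hleft, hright⟩ := hR h hh m hm E hE
  have hm0 : 0 < m := hM.trans_le hm
  have hR0 : 0 < R h m E := hr₂pos.trans_le hRr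
  have hpt : ∀ x > 0, x ≠ 1 → R h m E * |G h m E (R h m E * x)| ≤ A * majorant x := by
    intro x hx hx1
    have hh2 : h ^ 2 ≤ 1 := pow_le_one₀ hh.1.le hh.2
    refine le_trans (le_of_eq ?_) (hbd m (m + h ^ 2 / 4) E (R h m E) hm
      (by linarith [sq_nonneg h]) (by linarith) hE.1 hE.2 hRr hturn x hx hx1)
    rw [← mul_G_eq_scaledG P hR0 (hf h m E)
      (fun r hr => by
        rw [hf]; exact mul_pos (inv_pos.2 hm0) (sub_pos.2 (hleft r hr)))
      (fun r hr => by
        rw [hf]; exact mul_neg_of_pos_of_neg (inv_pos.2 hm0) (sub_neg.2 (hright r hr))) hx hx1,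
      abs_mul, abs_of_pos hR0, hG, hζO, hg]
  have hscale : ∫ r in Ioi (0:ℝ) \ {R h m E}, |G h m E r| =
      ∫ x in Ioi (0:ℝ), R h m E * |G h m E (R h m E * x)| := by
    rw [setIntegral_congr_set (sdiff_null_ae_eq_self (measure_singleton _)), MeasureTheory.integral_const_mul,
      integral_comp_mul_left_Ioi (fun r => |G h m E r|) 0 hR0, mul_zero, smul_eq_mul,
      mul_inv_cancel_left₀ hR0.ne']
  have hint : Integrable (fun x => A * majorant x) := integrable_majorant.const_mul A
  calc ∫ r in Ioi (0:ℝ) \ {R h m E}, |G h m E r|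
      = ∫ x in Ioi (0:ℝ), R h m E * |G h m E (R h m E * x)| := hscale
    _ ≤ ∫ x in Ioi (0:ℝ), A * majorant x := by
      refine integral_mono_of_nonneg (Eventually.of_forall fun x => by positivity)
        hint.integrableOn ?_
      filter_upwards [ae_restrict_mem measurableSet_Ioi,
        ae_restrict_of_ae (compl_mem_ae_iff.2 (measure_singleton (1:ℝ)))] with x hx hx1
      exact hpt x hx hx1
    _ ≤ ∫ x, A * majorant x :=
      setIntegral_le_integral hint
        (Eventually.of_forall fun x => mul_nonneg hA.le (majorant_nonneg x))
    _ ≤ A * (∫ x, majorant x) + 1 := by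
      rw [MeasureTheory.integral_const_mul]; linarith
end

section
/- There is a constant C_A > 0 such that for all real numbers x and x' with x' ≤ x: |x|^{1/2} |x'|^{1/2} Ai(x)² ( Ai(x')² + Bi(x')² ) ≤ C_A². -/
/-!
With `ζ(x) = (2/3) x^{3/2}` for `x ≥ 0` and `ζ(x) = 0` for `x < 0`, the bounds

  `|x|^{1/4} |Ai x| ≤ C e^{-ζ(x)}`  and  `|x|^{1/4} |Bi x| ≤ C e^{ζ(x)}`

hold for every `x ≠ 0`. Since `ζ` is monotone and nonnegative, multiplying the bound for `Ai` at `x`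
with those for `Ai` and `Bi` at `x' ≤ x` gives the claim.

Write `x = ± q⁴` with `q > 0`, so that `|x|^{1/4} = q`. The oscillatory integrals
`∫ exp (i (t³/3 + x t)) dt` are `O(1/q)` by the first-derivative test of van der Corput
(`norm_integral_airyKernel_le`), applied for `x = -q⁴`, `q ≥ 1`, off a window of radius `1/q` around
the stationary point `t = q²`. For `x = q⁴` the decay of `Ai` comes from moving the contour to height
`q²`, through the saddle point, where the integrand has a Gaussian modulus (`abs_integral_cos_le`).
The exponential integral in `Bi` is also dominated by a Gaussian (`integral_exp_pos_le`,
`integral_exp_neg_le`).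
-/

open Set MeasureTheory Filter intervalIntegral

/-! ### The kernel -/

/-- The entire function `z ↦ exp (i (z³/3 + x z))`, whose integral over the positive real half-line
has real part `π Ai x`. -/
noncomputable def airyKernel (x : ℝ) (z : ℂ) : ℂ :=
  Complex.exp (Complex.I * (z ^ 3 / 3 + x * z))

lemma airyKernel_differentiable (x : ℝ) : Differentiable ℂ (airyKernel x) := by
  unfold airyKernel
  fun_prop

lemma airyKernel_continuous (x : ℝ) : Continuous (airyKernel x) :=
  (airyKernel_differentiable x).continuous

lemma airyKernel_ofReal (x t : ℝ) :
    airyKernel x t = Complex.exp ((t ^ 3 / 3 + x * t : ℝ) * Complex.I) := by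
  unfold airyKernel
  push_cast
  ring_nf

lemma norm_airyKernel_ofReal (x t : ℝ) : ‖airyKernel x t‖ = 1 := by
  rw [airyKernel_ofReal, Complex.norm_exp_ofReal_mul_I]

lemma airyKernel_intervalIntegrable (x a b : ℝ) :
    IntervalIntegrable (fun t : ℝ => airyKernel x t) volume a b :=
  ((airyKernel_continuous x).comp Complex.continuous_ofReal).intervalIntegrable a b

lemma re_integral_airyKernel (x a b : ℝ) :
    (∫ t in a..b, airyKernel x t).re = ∫ t in a..b, Real.cos (t ^ 3 / 3 + x * t) := by
  have h := Complex.reCLM.intervalIntegral_comp_comm (airyKernel_intervalIntegrable x a b)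
  simp only [Complex.reCLM_apply] at h
  rw [← h]
  refine intervalIntegral.integral_congr fun t _ => ?_
  simp only [airyKernel_ofReal, Complex.exp_ofReal_mul_I_re]

lemma im_integral_airyKernel (x a b : ℝ) :
    (∫ t in a..b, airyKernel x t).im = ∫ t in a..b, Real.sin (t ^ 3 / 3 + x * t) := by
  have h := Complex.imCLM.intervalIntegral_comp_comm (airyKernel_intervalIntegrable x a b)
  simp only [Complex.imCLM_apply] at h
  rw [← h]
  refine intervalIntegral.integral_congr fun t _ => ?_
  simp only [airyKernel_ofReal, Complex.exp_ofReal_mul_I_im]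

/-! ### The oscillatory integral on the real line -/

/-- The first-derivative test (van der Corput): the phase `t³/3 + x t` has derivative `t² + x`,
which is monotone for `t ≥ 0`; integrate by parts against its reciprocal. -/
lemma norm_integral_airyKernel_le {x a b l : ℝ} (ha : 0 ≤ a) (hab : a ≤ b) (hl : 0 < l)
    (h : ∀ t ∈ Icc a b, l ≤ |t ^ 2 + x|) :
    ‖∫ t in a..b, airyKernel x t‖ ≤ 4 / l := by
  have hne : ∀ t ∈ Icc a b, t ^ 2 + x ≠ 0 := fun t ht => by
    have := h t ht
    exact abs_pos.1 (hl.trans_le this)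
  set u : ℝ → ℝ := fun t => (t ^ 2 + x)⁻¹ with hu
  set u' : ℝ → ℝ := fun t => -(2 * t) / (t ^ 2 + x) ^ 2 with hu'
  have hud : ∀ t ∈ uIcc a b, HasDerivAt u (u' t) t := fun t ht => by
    rw [uIcc_of_le hab] at ht
    have h1 : HasDerivAt (fun t : ℝ => t ^ 2 + x) (2 * t) t := by
      simpa using (hasDerivAt_pow 2 t).add_const x
    exact h1.inv (hne t ht)
  have hu'c : ContinuousOn u' (uIcc a b) := by
    rw [uIcc_of_le hab]
    exact ContinuousOn.div (by fun_prop) (by fun_prop) fun t ht => pow_ne_zero 2 (hne t ht)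
  have hEd : ∀ t : ℝ, HasDerivAt (fun t : ℝ => airyKernel x t)
      (Complex.I * (t ^ 2 + x) * airyKernel x t) t := fun t => by
    have h1 : HasDerivAt (fun z : ℂ => Complex.I * (z ^ 3 / 3 + x * z))
        (Complex.I * ((t : ℂ) ^ 2 + x)) (t : ℂ) := by
      have := ((((hasDerivAt_pow 3 (t : ℂ)).div_const 3).add
        ((hasDerivAt_id (t : ℂ)).const_mul (x : ℂ))).const_mul Complex.I)
      refine this.congr_deriv ?_
      norm_num
    refine (h1.cexp.comp_ofReal).congr_deriv ?_
    unfold airyKernel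
    ring
  have hEc : Continuous fun t : ℝ => airyKernel x t :=
    (airyKernel_continuous x).comp Complex.continuous_ofReal
  have hc1 : ContinuousOn (fun t : ℝ => (u' t : ℂ) * airyKernel x t) (uIcc a b) :=
    (Complex.continuous_ofReal.comp_continuousOn hu'c).mul hEc.continuousOn
  have hc2 : Continuous fun t : ℝ => Complex.I * airyKernel x t := continuous_const.mul hEc
  have hFTC := intervalIntegral.integral_eq_sub_of_hasDerivAt
    (f := fun t : ℝ => (u t : ℂ) * airyKernel x t)
    (f' := fun t : ℝ => (u' t : ℂ) * airyKernel x t + Complex.I * airyKernel x t) (a := a) (b := b)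
    (fun t ht => by
      refine ((hud t ht).ofReal_comp.mul (hEd t)).congr_deriv ?_
      rw [uIcc_of_le hab] at ht
      have h2 : (t : ℂ) ^ 2 + x ≠ 0 := by exact_mod_cast hne t ht
      simp only [hu]
      push_cast
      field_simp)
    ((hc1.add hc2.continuousOn).intervalIntegrable)
  rw [intervalIntegral.integral_add hc1.intervalIntegrable
    (hc2.intervalIntegrable a b),
    intervalIntegral.integral_const_mul] at hFTC
  have hI : ‖∫ t in a..b, airyKernel x t‖ = ‖Complex.I * ∫ t in a..b, airyKernel x t‖ := by simp
  have hub : ∀ t ∈ Icc a b, |u t| ≤ 1 / l := fun t ht => by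
    simp only [hu, abs_inv]
    rw [one_div]
    exact inv_anti₀ hl (h t ht)
  have hR : ‖∫ t in a..b, (u' t : ℂ) * airyKernel x t‖ ≤ u a - u b := by
    have h3 : ∫ t in a..b, -u' t = u a - u b := by
      rw [intervalIntegral.integral_neg,
        intervalIntegral.integral_eq_sub_of_hasDerivAt hud hu'c.intervalIntegrable]
      ring
    rw [← h3]
    refine intervalIntegral.norm_integral_le_of_norm_le hab (ae_of_all _ fun t ht => ?_)
      hu'c.neg.intervalIntegrable
    rw [norm_mul, norm_airyKernel_ofReal, mul_one, Complex.norm_real, Real.norm_eq_abs]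
    refine (abs_of_nonpos ?_).le
    have : 0 ≤ t := ha.trans ht.1.le
    simp only [hu']
    exact div_nonpos_of_nonpos_of_nonneg (by linarith) (by positivity)
  have ha' := hub a (left_mem_Icc.2 hab)
  have hb' := hub b (right_mem_Icc.2 hab)
  have e : Complex.I * ∫ t in a..b, airyKernel x t
      = (u b * airyKernel x b - u a * airyKernel x a)
        - ∫ t in a..b, (u' t : ℂ) * airyKernel x t := by
    linear_combination hFTC
  have n1 := norm_sub_le ((u b : ℂ) * airyKernel x b - u a * airyKernel x a)
    (∫ t in a..b, (u' t : ℂ) * airyKernel x t)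
  have n2 := norm_sub_le ((u b : ℂ) * airyKernel x b) (u a * airyKernel x a)
  simp only [norm_mul, norm_airyKernel_ofReal, mul_one, Complex.norm_real, Real.norm_eq_abs] at n2
  rw [hI, e]
  have h4 : 4 / l = 4 * (1 / l) := by ring
  rw [h4]
  linarith [le_abs_self (u a), neg_abs_le (u b)]

lemma norm_integral_airyKernel_le_length (x : ℝ) {a b : ℝ} (hab : a ≤ b) :
    ‖∫ t in a..b, airyKernel x t‖ ≤ b - a := by
  have := intervalIntegral.norm_integral_le_of_norm_le_const (a := a) (b := b) (C := 1)
    (f := fun t : ℝ => airyKernel x t) fun t _ => (norm_airyKernel_ofReal x t).le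
  rwa [one_mul, abs_of_nonneg (sub_nonneg.2 hab)] at this

lemma norm_integral_airyKernel_split (x a b c : ℝ) :
    ‖∫ t in a..c, airyKernel x t‖ ≤
      ‖∫ t in a..b, airyKernel x t‖ + ‖∫ t in b..c, airyKernel x t‖ := by
  rw [← intervalIntegral.integral_add_adjacent_intervals
    (airyKernel_intervalIntegrable x a b) (airyKernel_intervalIntegrable x b c)]
  exact norm_add_le _ _

/-- For `|x| ≤ 1` the phase has no stationary point beyond `t = 2`. -/
lemma norm_integral_airyKernel_small {x T : ℝ} (hx : |x| ≤ 1) (hT : 2 ≤ T) :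
    ‖∫ t in (0:ℝ)..T, airyKernel x t‖ ≤ 10 := by
  have h1 := norm_integral_airyKernel_split x 0 2 T
  have h2 := norm_integral_airyKernel_le_length x (a := 0) (b := 2) (by norm_num)
  have h3 := norm_integral_airyKernel_le (x := x) (a := 2) (b := T) (l := 3) (by norm_num) hT
    (by norm_num) fun t ht => by
      have := (abs_le.1 hx).1
      refine le_trans ?_ (le_abs_self _)
      nlinarith [ht.1]
  linarith

lemma norm_integral_airyKernel_pos {q T : ℝ} (hq : 0 < q) (hT : 2 ≤ T) :
    q * ‖∫ t in (0:ℝ)..T, airyKernel (q ^ 4) t‖ ≤ 10 := by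
  rcases le_total q 1 with h1 | h1
  · have := norm_integral_airyKernel_small (x := q ^ 4) (T := T)
      (by rw [abs_of_nonneg (by positivity)]; exact pow_le_one₀ hq.le h1) hT
    nlinarith [norm_nonneg (∫ t in (0:ℝ)..T, airyKernel (q ^ 4) t)]
  · have h4 : q ≤ q ^ 4 := le_self_pow₀ h1 (by norm_num)
    have := norm_integral_airyKernel_le (x := q ^ 4) (a := 0) (b := T) (l := q) le_rfl
      (by linarith) hq fun t _ => by
        refine le_trans ?_ (le_abs_self _)
        nlinarith [sq_nonneg t]
    calc _ ≤ q * (4 / q) := by gcongr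
      _ = 4 := by field_simp
      _ ≤ 10 := by norm_num

/-- For `x = -q⁴` with `q ≥ 1` the stationary point is `t = q²`; removing the window of radius `1/q` around it,
the derivative of the phase is at least `q` in absolute value. -/
lemma norm_integral_airyKernel_neg {q T : ℝ} (hq : 0 < q) (hT : 2 ≤ T) (hT' : q ^ 2 + 1 / q ≤ T) :
    q * ‖∫ t in (0:ℝ)..T, airyKernel (-q ^ 4) t‖ ≤ 10 := by
  rcases le_total q 1 with h1 | h1
  · have := norm_integral_airyKernel_small (x := -q ^ 4) (T := T)
      (by rw [abs_neg, abs_of_nonneg (by positivity)]; exact pow_le_one₀ hq.le h1) hT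
    nlinarith [norm_nonneg (∫ t in (0:ℝ)..T, airyKernel (-q ^ 4) t)]
  · obtain ⟨d, hd⟩ : ∃ d, d = 1 / q := ⟨_, rfl⟩
    rw [← hd] at hT'
    have hd0 : 0 < d := by rw [hd]; positivity
    have hdq : d * q = 1 := by rw [hd]; field_simp
    have hd2 : d * q ^ 2 = q := by rw [hd]; field_simp
    have hdle : d ≤ q ^ 2 := by nlinarith
    have s1 := norm_integral_airyKernel_split (-q ^ 4) 0 (q ^ 2 - d) T
    have s2 := norm_integral_airyKernel_split (-q ^ 4) (q ^ 2 - d) (q ^ 2 + d) T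
    have b1 := norm_integral_airyKernel_le (x := -q ^ 4) (a := 0) (b := q ^ 2 - d) (l := q) le_rfl
      (by linarith) hq fun t ht => by
        refine le_trans ?_ (neg_le_abs _)
        have e1 : 0 ≤ (q ^ 2 - d - t) * (q ^ 2 + t) :=
          mul_nonneg (by linarith [ht.2]) (by nlinarith [ht.1])
        nlinarith [mul_nonneg hd0.le ht.1]
    have b2 := norm_integral_airyKernel_le_length (-q ^ 4) (a := q ^ 2 - d) (b := q ^ 2 + d)
      (by linarith)
    have b3 := norm_integral_airyKernel_le (x := -q ^ 4) (a := q ^ 2 + d) (b := T) (l := q)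
      (by positivity) hT' hq fun t ht => by
        refine le_trans ?_ (le_abs_self _)
        have ht0 : 0 ≤ t := le_trans (by positivity) ht.1
        have e1 : 0 ≤ (t - (q ^ 2 + d)) * (q ^ 2 + t) :=
          mul_nonneg (by linarith [ht.1]) (by positivity)
        nlinarith [mul_nonneg hd0.le ht0]
    have h4 : 4 / q = 4 * d := by rw [hd]; ring
    rw [h4] at b1 b3
    calc _ ≤ q * (10 * d) := by gcongr; linarith
      _ = 10 := by linear_combination 10 * hdq

/-! ### Decay of `Ai` by a contour shift -/

lemma norm_airyKernel_add_mul_I (x t s : ℝ) :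
    ‖airyKernel x (t + s * Complex.I)‖ = Real.exp (-(t ^ 2 * s) + s ^ 3 / 3 - x * s) := by
  unfold airyKernel
  rw [Complex.norm_exp]
  congr 1
  have : Complex.I * (((t : ℂ) + s * Complex.I) ^ 3 / 3 + x * (t + s * Complex.I))
      = ((-(t ^ 2 * s) + s ^ 3 / 3 - x * s : ℝ) : ℂ)
        + ((t ^ 3 / 3 - t * s ^ 2 + x * t : ℝ) : ℂ) * Complex.I := by
    push_cast
    linear_combination (((t : ℂ) ^ 2 * s + x * s)
      + t * s ^ 2 * Complex.I + (s : ℂ) ^ 3 / 3 * (Complex.I ^ 2 - 1)) * Complex.I_sq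
  rw [this, Complex.add_re, Complex.re_ofReal_mul, Complex.ofReal_re, Complex.I_re, mul_zero,
    add_zero]

lemma airyKernel_mul_I (x s : ℝ) :
    airyKernel x (s * Complex.I) = (Real.exp (s ^ 3 / 3 - x * s) : ℂ) := by
  unfold airyKernel
  rw [Complex.ofReal_exp]
  congr 1
  push_cast
  linear_combination ((x : ℂ) * s + (s : ℂ) ^ 3 / 3 * (Complex.I ^ 2 - 1)) * Complex.I_sq

lemma integral_gaussian_le {c T : ℝ} (m : ℝ) (hc : 0 < c) (hT : 0 ≤ T) :
    ∫ t in (0:ℝ)..T, Real.exp (-c * (t - m) ^ 2) ≤ √(Real.pi / c) := by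
  rw [intervalIntegral.integral_of_le hT]
  have hi := (integrable_exp_neg_mul_sq hc).comp_sub_right m
  refine (setIntegral_le_integral hi (ae_of_all _ fun t => (Real.exp_pos _).le)).trans ?_
  rw [MeasureTheory.integral_sub_right_eq_self (fun t => Real.exp (-c * t ^ 2)) m,
    integral_gaussian]

/-- On the rectangle with vertices `0`, `T`, `T + i q²`, `i q²` the left side contributes a purely
imaginary amount, the right side is negligible, and on the top side, through the saddle point
`i q²`, the kernel has modulus `exp (-(2/3) q⁶ - q² t²)`. -/
lemma abs_integral_cos_le {q T : ℝ} (hT : 0 < T) (hq : 0 < q) :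
    |∫ t in (0:ℝ)..T, Real.cos (t ^ 3 / 3 + q ^ 4 * t)| ≤
      Real.exp (-(2 / 3 * q ^ 6)) * √(Real.pi / q ^ 2) + 1 / T ^ 2 := by
  have hrect := Complex.integral_boundary_rect_eq_zero_of_differentiableOn (airyKernel (q ^ 4))
    0 (T + (q ^ 2 : ℝ) * Complex.I) (airyKernel_differentiable _).differentiableOn
  have hre : (T + (q ^ 2 : ℝ) * Complex.I : ℂ).re = T := by
    rw [Complex.add_re, Complex.re_ofReal_mul]; simp
  have him : (T + (q ^ 2 : ℝ) * Complex.I : ℂ).im = q ^ 2 := by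
    rw [Complex.add_im, Complex.im_ofReal_mul]; simp
  rw [hre, him] at hrect
  simp only [Complex.zero_re, Complex.zero_im, Complex.ofReal_zero, zero_mul, add_zero, zero_add,
    airyKernel_mul_I, intervalIntegral.integral_ofReal, smul_eq_mul] at hrect
  set top := ∫ t in (0:ℝ)..T, airyKernel (q ^ 4) (t + (q ^ 2 : ℝ) * Complex.I) with htop
  set side := ∫ s in (0:ℝ)..q ^ 2, airyKernel (q ^ 4) (T + s * Complex.I) with hside
  have hbot := re_integral_airyKernel (q ^ 4) 0 T
  have hkey : ∫ t in (0:ℝ)..T, Real.cos (t ^ 3 / 3 + q ^ 4 * t)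
      = (top - Complex.I * side).re := by
    have h := congrArg Complex.re hrect
    rw [Complex.sub_re, Complex.add_re, Complex.sub_re, hbot, Complex.re_mul_ofReal] at h
    simp only [Complex.I_re, zero_mul, sub_zero, Complex.zero_re] at h
    rw [Complex.sub_re]
    linarith
  have h_top : ‖top‖ ≤ Real.exp (-(2 / 3 * q ^ 6)) * √(Real.pi / q ^ 2) := by
    have h1 : ‖top‖ ≤ ∫ t in (0:ℝ)..T,
        Real.exp (-(2 / 3 * q ^ 6)) * Real.exp (-q ^ 2 * (t - 0) ^ 2) := by
      refine intervalIntegral.norm_integral_le_of_norm_le hT.le (ae_of_all _ fun t _ => ?_)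
        (Continuous.intervalIntegrable (by fun_prop) _ _)
      rw [norm_airyKernel_add_mul_I, ← Real.exp_add]
      refine le_of_eq (congrArg _ ?_)
      ring
    rw [intervalIntegral.integral_const_mul] at h1
    exact h1.trans (mul_le_mul_of_nonneg_left (integral_gaussian_le 0 (by positivity) hT.le)
      (Real.exp_pos _).le)
  have h_side : ‖side‖ ≤ 1 / T ^ 2 := by
    have h1 : ‖side‖ ≤ ∫ s in (0:ℝ)..q ^ 2, Real.exp (-T ^ 2 * s) := by
      refine intervalIntegral.norm_integral_le_of_norm_le (by positivity)
        (ae_of_all _ fun s hs => ?_) (Continuous.intervalIntegrable (by fun_prop) _ _)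
      rw [norm_airyKernel_add_mul_I, Real.exp_le_exp]
      have h2 : s ^ 2 ≤ (q ^ 2) ^ 2 := pow_le_pow_left₀ hs.1.le hs.2 2
      nlinarith [mul_nonneg hs.1.le (sub_nonneg.2 h2), pow_pos hs.1 3]
    refine h1.trans ?_
    rw [intervalIntegral.integral_eq_sub_of_hasDerivAt
      (f := fun s => -(Real.exp (-T ^ 2 * s) / T ^ 2)) (fun s _ => by
        have := ((((hasDerivAt_id s).const_mul (-T ^ 2)).exp).div_const (T ^ 2)).neg
        refine this.congr_deriv ?_
        simp only [id]
        field_simp) (Continuous.intervalIntegrable (by fun_prop) _ _)]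
    have : 0 < Real.exp (-T ^ 2 * q ^ 2) / T ^ 2 := by positivity
    simp only [mul_zero, Real.exp_zero]
    linarith
  rw [hkey]
  refine (Complex.abs_re_le_norm _).trans ((norm_sub_le _ _).trans ?_)
  rw [norm_mul, Complex.norm_I, one_mul]
  linarith

/-! ### The exponential part of `Bi` -/

lemma mul_sqrt_le_three {q : ℝ} (hq : 0 < q) : q * √(Real.pi / (2 / 3 * q ^ 2)) ≤ 3 := by
  have h1 : Real.pi / (2 / 3 * q ^ 2) ≤ (3 / q) ^ 2 := by
    rw [div_pow, div_le_div_iff₀ (by positivity) (by positivity)]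
    nlinarith [Real.pi_le_four, pow_pos hq 2]
  calc _ ≤ q * √((3 / q) ^ 2) := by gcongr
    _ = q * (3 / q) := by rw [Real.sqrt_sq (by positivity)]
    _ = 3 := by field_simp

/-- The exponent `q⁴ t - t³/3` is largest at `t = q²`, with value `(2/3) q⁶`, and for `t ≥ 0` it
lies below the parabola `(2/3) q⁶ - (2/3) q² (t - q²)²`. -/
lemma integral_exp_pos_le {q T : ℝ} (hq : 0 < q) (hT : 0 ≤ T) :
    q * ∫ t in (0:ℝ)..T, Real.exp (-t ^ 3 / 3 + q ^ 4 * t) ≤ 3 * Real.exp (2 / 3 * q ^ 6) := by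
  have h1 : ∫ t in (0:ℝ)..T, Real.exp (-t ^ 3 / 3 + q ^ 4 * t) ≤ ∫ t in (0:ℝ)..T,
      Real.exp (2 / 3 * q ^ 6) * Real.exp (-(2 / 3 * q ^ 2) * (t - q ^ 2) ^ 2) := by
    refine intervalIntegral.integral_mono_on hT (Continuous.intervalIntegrable (by fun_prop) _ _)
      (Continuous.intervalIntegrable (by fun_prop) _ _) fun t ht => ?_
    rw [← Real.exp_add, Real.exp_le_exp]
    nlinarith [mul_nonneg ht.1 (sq_nonneg (t - q ^ 2))]
  rw [intervalIntegral.integral_const_mul] at h1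
  have h2 := integral_gaussian_le (c := 2 / 3 * q ^ 2) (q ^ 2) (by positivity) hT
  calc _ ≤ q * (Real.exp (2 / 3 * q ^ 6) * √(Real.pi / (2 / 3 * q ^ 2))) := by
        gcongr; exact h1.trans (by gcongr)
    _ = (q * √(Real.pi / (2 / 3 * q ^ 2))) * Real.exp (2 / 3 * q ^ 6) := by ring
    _ ≤ _ := by gcongr; exact mul_sqrt_le_three hq

/-- By the arithmetic-geometric mean inequality, `t³/3 + q⁴ t ≥ (2/√3) q² t² ≥ (2/3) q² t²`. -/
lemma integral_exp_neg_le {q T : ℝ} (hq : 0 < q) (hT : 0 ≤ T) :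
    q * ∫ t in (0:ℝ)..T, Real.exp (-t ^ 3 / 3 + -q ^ 4 * t) ≤ 3 := by
  have h1 : ∫ t in (0:ℝ)..T, Real.exp (-t ^ 3 / 3 + -q ^ 4 * t) ≤ ∫ t in (0:ℝ)..T,
      Real.exp (-(2 / 3 * q ^ 2) * (t - 0) ^ 2) := by
    refine intervalIntegral.integral_mono_on hT (Continuous.intervalIntegrable (by fun_prop) _ _)
      (Continuous.intervalIntegrable (by fun_prop) _ _) fun t ht => ?_
    rw [Real.exp_le_exp]
    nlinarith [mul_nonneg ht.1 (sq_nonneg (t - q ^ 2)), mul_nonneg ht.1 (pow_pos hq 4).le]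
  have h2 := integral_gaussian_le (c := 2 / 3 * q ^ 2) 0 (by positivity) hT
  exact (mul_le_mul_of_nonneg_left (h1.trans h2) hq.le).trans (mul_sqrt_le_three hq)

/-! ### Pointwise bounds for the Airy functions -/

/-- The exponent `(2/3) x^{3/2}` governing the growth of the Airy functions for `x ≥ 0`, extended
by `0` to `x < 0` so as to be monotone on the whole line. -/
noncomputable def airyExponent (x : ℝ) : ℝ := 2 / 3 * √x ^ 3

lemma airyExponent_mono : Monotone airyExponent := fun x y h => by
  unfold airyExponent
  gcongr

lemma airyExponent_nonneg (x : ℝ) : 0 ≤ airyExponent x := by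
  unfold airyExponent
  positivity

lemma airyExponent_pow_four {q : ℝ} : airyExponent (q ^ 4) = 2 / 3 * q ^ 6 := by
  have : √(q ^ 4) = q ^ 2 := by
    rw [show q ^ 4 = (q ^ 2) ^ 2 by ring, Real.sqrt_sq (by positivity)]
  unfold airyExponent
  rw [this]
  ring

lemma airyExponent_neg_pow_four {q : ℝ} : airyExponent (-q ^ 4) = 0 := by
  unfold airyExponent
  rw [Real.sqrt_eq_zero_of_nonpos (by nlinarith [sq_nonneg (q ^ 2)])]
  norm_num

lemma exists_pow_four {x : ℝ} (hx : x ≠ 0) : ∃ q > 0, x = q ^ 4 ∨ x = -q ^ 4 := by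
  have h : √√|x| ^ 4 = |x| := by
    rw [show √√|x| ^ 4 = (√√|x| ^ 2) ^ 2 by ring, Real.sq_sqrt (by positivity),
      Real.sq_sqrt (by positivity)]
  refine ⟨√√|x|, by positivity, ?_⟩
  rw [h]
  rcases abs_choice x with h | h
  · exact Or.inl h.symm
  · exact Or.inr (by rw [h, neg_neg])

lemma mul_abs_le_of_tendsto {f : ℝ → ℝ} {L q K : ℝ} (hq : 0 < q)
    (h : Tendsto (fun T => (1 / Real.pi) * f T) atTop (nhds L))
    (hf : ∀ᶠ T in atTop, q * |f T| ≤ K) : q * |L| ≤ K := by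
  refine le_of_tendsto (h.abs.const_mul q) ?_
  filter_upwards [hf] with T hT
  have hpi : 1 / Real.pi ≤ 1 := by
    rw [div_le_one Real.pi_pos]
    linarith [Real.pi_gt_three]
  rw [abs_mul, abs_of_pos (by positivity)]
  have : 0 ≤ q * |f T| := by positivity
  nlinarith

lemma airyAi_bound {x L q : ℝ} (hq : 0 < q) (hx : x = q ^ 4 ∨ x = -q ^ 4)
    (h : Tendsto (fun T => (1 / Real.pi) * ∫ t in (0:ℝ)..T, Real.cos (t ^ 3 / 3 + x * t))
      atTop (nhds L)) :
    q * |L| ≤ 10 * Real.exp (-airyExponent x) := by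
  rcases hx with rfl | rfl
  · rw [airyExponent_pow_four]
    refine mul_abs_le_of_tendsto hq h ?_
    -- the error `1 / T²` from the right side of the rectangle is absorbed into the constant
    have h0 : Tendsto (fun T : ℝ => 1 / T ^ 2) atTop (nhds 0) := by
      simp only [one_div]
      exact (tendsto_pow_atTop (α := ℝ) two_ne_zero).inv_tendsto_atTop
    have hpos : 0 < Real.exp (-(2 / 3 * q ^ 6)) / q := by positivity
    filter_upwards [eventually_gt_atTop 0, h0.eventually_lt_const hpos] with T hT hT'
    have h1 := abs_integral_cos_le hT hq
    have h2 : √(Real.pi / q ^ 2) ≤ 2 / q := by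
      rw [Real.sqrt_le_left (by positivity), div_pow]
      gcongr
      linarith [Real.pi_le_four]
    calc _ ≤ q * (Real.exp (-(2 / 3 * q ^ 6)) * (2 / q) + Real.exp (-(2 / 3 * q ^ 6)) / q) := by
          gcongr
          exact h1.trans (by gcongr)
      _ = 3 * Real.exp (-(2 / 3 * q ^ 6)) := by field_simp; ring
      _ ≤ _ := by gcongr; norm_num
  · rw [airyExponent_neg_pow_four, neg_zero, Real.exp_zero, mul_one]
    refine mul_abs_le_of_tendsto hq h ?_
    filter_upwards [eventually_ge_atTop 2, eventually_ge_atTop (q ^ 2 + 1 / q)] with T hT hT'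
    rw [← re_integral_airyKernel]
    exact (mul_le_mul_of_nonneg_left (Complex.abs_re_le_norm _) hq.le).trans
      (norm_integral_airyKernel_neg hq hT hT')

lemma airyBi_bound {x L q : ℝ} (hq : 0 < q) (hx : x = q ^ 4 ∨ x = -q ^ 4)
    (h : Tendsto (fun T => (1 / Real.pi) * ∫ t in (0:ℝ)..T,
        (Real.exp (-t ^ 3 / 3 + x * t) + Real.sin (t ^ 3 / 3 + x * t))) atTop (nhds L)) :
    q * |L| ≤ 13 * Real.exp (airyExponent x) := by
  refine mul_abs_le_of_tendsto hq h ?_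
  filter_upwards [eventually_ge_atTop 2, eventually_ge_atTop (q ^ 2 + 1 / q)] with T hT hT'
  have hT0 : 0 ≤ T := by linarith
  rw [intervalIntegral.integral_add (Continuous.intervalIntegrable (by fun_prop) _ _)
    (Continuous.intervalIntegrable (by fun_prop) _ _), ← im_integral_airyKernel]
  have hosc : q * ‖∫ t in (0:ℝ)..T, airyKernel x t‖ ≤ 10 := by
    rcases hx with rfl | rfl
    · exact norm_integral_airyKernel_pos hq hT
    · exact norm_integral_airyKernel_neg hq hT hT'
  have hexp : q * ∫ t in (0:ℝ)..T, Real.exp (-t ^ 3 / 3 + x * t)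
      ≤ 3 * Real.exp (airyExponent x) := by
    rcases hx with rfl | rfl
    · rw [airyExponent_pow_four]
      exact integral_exp_pos_le hq hT0
    · rw [airyExponent_neg_pow_four, Real.exp_zero, mul_one]
      exact integral_exp_neg_le hq hT0
  have hnn : 0 ≤ ∫ t in (0:ℝ)..T, Real.exp (-t ^ 3 / 3 + x * t) :=
    intervalIntegral.integral_nonneg hT0 fun t _ => (Real.exp_pos _).le
  have h1 : 1 ≤ Real.exp (airyExponent x) := Real.one_le_exp (airyExponent_nonneg x)
  calc _ ≤ q * ((∫ t in (0:ℝ)..T, Real.exp (-t ^ 3 / 3 + x * t))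
        + ‖∫ t in (0:ℝ)..T, airyKernel x t‖) := by
        gcongr
        refine (abs_add_le _ _).trans ?_
        rw [abs_of_nonneg hnn]
        gcongr
        exact Complex.abs_im_le_norm _
    _ ≤ 3 * Real.exp (airyExponent x) + 10 := by rw [mul_add]; exact add_le_add hexp hosc
    _ ≤ _ := by linarith

lemma abs_rpow_half {x q : ℝ} (hx : x = q ^ 4 ∨ x = -q ^ 4) : |x| ^ ((1:ℝ) / 2) = q ^ 2 := by
  have : |x| = (q ^ 2) ^ 2 := by
    rcases hx with rfl | rfl
    · rw [abs_of_nonneg (by positivity)]; ring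
    · rw [abs_neg, abs_of_nonneg (by positivity)]; ring
  rw [← Real.sqrt_eq_rpow, this, Real.sqrt_sq (by positivity)]

/-! ### The product bound -/

/-- For the Airy functions `Ai` and `Bi`, characterized by their integral definitions
`Ai(x) = lim_{T→∞} (1/π) ∫₀^T cos(t³/3 + xt) dt` and
`Bi(x) = lim_{T→∞} (1/π) ∫₀^T (e^{−t³/3 + xt} + sin(t³/3 + xt)) dt`,
there is a constant `C_A > 0` such that for all real `x' ≤ x`,
`|x|^{1/2} |x'|^{1/2} Ai(x)² (Ai(x')² + Bi(x')²) ≤ C_A²`. -/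
theorem airy_product_bound
    (Ai Bi : ℝ → ℝ)
    (hAi : ∀ x : ℝ, Filter.Tendsto
      (fun T => (1 / Real.pi) * ∫ t in (0:ℝ)..T, Real.cos (t ^ 3 / 3 + x * t))
      Filter.atTop (nhds (Ai x)))
    (hBi : ∀ x : ℝ, Filter.Tendsto
      (fun T => (1 / Real.pi) * ∫ t in (0:ℝ)..T,
        (Real.exp (-t ^ 3 / 3 + x * t) + Real.sin (t ^ 3 / 3 + x * t)))
      Filter.atTop (nhds (Bi x))) :
    ∃ C_A > (0:ℝ), ∀ x x' : ℝ, x' ≤ x →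
      |x| ^ ((1:ℝ)/2) * |x'| ^ ((1:ℝ)/2) * Ai x ^ 2 * (Ai x' ^ 2 + Bi x' ^ 2) ≤ C_A ^ 2 := by
  -- `200² ≥ 10² (10² + 13²)`
  refine ⟨200, by norm_num, fun x y hyx => ?_⟩
  rcases eq_or_ne x 0 with rfl | hx
  · simp
  rcases eq_or_ne y 0 with rfl | hy
  · simp
  obtain ⟨q, hq, hxq⟩ := exists_pow_four hx
  obtain ⟨p, hp, hyp⟩ := exists_pow_four hy
  rw [abs_rpow_half hxq, abs_rpow_half hyp]
  have hA := airyAi_bound hq hxq (hAi x)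
  have hA' : p * |Ai y| ≤ 10 * Real.exp (airyExponent y) :=
    (airyAi_bound hp hyp (hAi y)).trans (by
      gcongr
      linarith [airyExponent_nonneg y])
  have hB' := airyBi_bound hp hyp (hBi y)
  have sqA : q ^ 2 * Ai x ^ 2 ≤ (10 * Real.exp (-airyExponent x)) ^ 2 := by
    rw [← sq_abs (Ai x), ← mul_pow]; gcongr
  have sqA' : p ^ 2 * Ai y ^ 2 ≤ (10 * Real.exp (airyExponent y)) ^ 2 := by
    rw [← sq_abs (Ai y), ← mul_pow]; gcongr
  have sqB' : p ^ 2 * Bi y ^ 2 ≤ (13 * Real.exp (airyExponent y)) ^ 2 := by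
    rw [← sq_abs (Bi y), ← mul_pow]; gcongr
  have hE : Real.exp (-airyExponent x) * Real.exp (airyExponent y) ≤ 1 := by
    rw [← Real.exp_add, Real.exp_le_one_iff]
    linarith [airyExponent_mono hyx]
  calc q ^ 2 * p ^ 2 * Ai x ^ 2 * (Ai y ^ 2 + Bi y ^ 2)
      = (q ^ 2 * Ai x ^ 2) * (p ^ 2 * Ai y ^ 2 + p ^ 2 * Bi y ^ 2) := by ring
    _ ≤ (10 * Real.exp (-airyExponent x)) ^ 2 *
        ((10 * Real.exp (airyExponent y)) ^ 2 + (13 * Real.exp (airyExponent y)) ^ 2) := by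
        gcongr
    _ = 26900 * (Real.exp (-airyExponent x) * Real.exp (airyExponent y)) ^ 2 := by ring
    _ ≤ 26900 * 1 ^ 2 := by gcongr
    _ ≤ 200 ^ 2 := by norm_num
end
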